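/- Let L > 0, let q_e : 𝕋_L → ℝ be smooth with q_e > 0, and let g : 𝕋_L → ℝ be smooth. Set ω̄* := ( (1/L)∫₀^L (2 g q_e² + ε g² q_e) ds ) / ( (1/L)∫₀^L q_e³ ds ). There exists ε₀ ∈ (0,1), depending only on q_e, g, L, such that for all 0 < ε < ε₀ the following holds. Let ω' > 0 with (ω')² = 1 − ε ω̄' for some ω̄' with |ω̄' − ω̄*| ≤ ε^{0.97}, let Q_prev be smooth on 𝕋_L × [0,∞) with ‖Q_prev‖_{X_{2,50}} ≤ ε^{0.99}, and let ω̄ ∈ ℝ with |ω̄ − ω̄*| ≤ ε^{0.97}. Suppose Q is a smooth solution on 𝕋_L × [0,∞) of ∂_s Q − ω' q_e(s) ∂_ψ² Q = f(Q_prev, s; ω') with Q(s,0) = ε ω̄ q_e(s)² + 2ε g(s) q_e(s) + ε² g(s)², Q(s,ψ) → 0 as ψ → ∞, and ‖Q‖_{X_{2,50}} < ∞, where f(Q_prev,s;ω') := (1 − ω' q_e(s)/√((ω')² q_e(s)² + Q_prev)) ∂_s Q_prev. Then ‖Q‖_{X_{2,50}} ≤ ε^{0.99}. -/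

import Mathlib

open MeasureTheory Set Function Filter

/-- `k`-th partial derivative in the tangential variable `s` of a function on
`𝕋_L × [0,∞)` (represented as a curried function `ℝ → ℝ → ℝ`). -/
noncomputable def dS (k : ℕ) (h : ℝ → ℝ → ℝ) : ℝ → ℝ → ℝ :=
  fun s ψ => iteratedDeriv k (fun s' => h s' ψ) s

/-- `j`-th partial derivative in the normal (von Mises) variable `ψ`. -/
noncomputable def dPsi (j : ℕ) (h : ℝ → ℝ → ℝ) : ℝ → ℝ → ℝ :=
  fun s ψ => iteratedDeriv j (fun ψ' => h s ψ') ψ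

/-- Squared `L²` norm over `𝕋_L × ℝ₊` (fundamental domain `(0,L] × (0,∞)`). -/
noncomputable def L2sq (L : ℝ) (h : ℝ → ℝ → ℝ) : ℝ :=
  ∫ p in Ioc (0:ℝ) L ×ˢ Ioi (0:ℝ), (h p.1 p.2) ^ 2

/-- Square-integrability over `𝕋_L × ℝ₊`. -/
def FiniteL2 (L : ℝ) (h : ℝ → ℝ → ℝ) : Prop :=
  IntegrableOn (fun p : ℝ × ℝ => (h p.1 p.2) ^ 2) (Ioc (0:ℝ) L ×ˢ Ioi (0:ℝ))

/-- The weight `⟨ψ⟩^m h`. -/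
noncomputable def wt (m : ℕ) (h : ℝ → ℝ → ℝ) : ℝ → ℝ → ℝ :=
  fun s ψ => (1 + ψ) ^ m * h s ψ

/-- Squared `X_{k,m}` norm:
`‖h‖²_{X_{k,m}} = Σ_{k'≤k} Σ_{m'≤m} (‖⟨ψ⟩^{m'}∂_s^{k'}h‖² + ‖⟨ψ⟩^{m'}∂_s^{k'+1}h‖²
+ ‖⟨ψ⟩^{m'}∂_ψ∂_s^{k'}h‖² + ‖⟨ψ⟩^{m'}∂_ψ²∂_s^{k'}h‖²)`. -/
noncomputable def XnormSq (L : ℝ) (k m : ℕ) (h : ℝ → ℝ → ℝ) : ℝ :=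
  ∑ k' ∈ Finset.range (k+1), ∑ m' ∈ Finset.range (m+1),
    (L2sq L (wt m' (dS k' h)) + L2sq L (wt m' (dS (k'+1) h))
      + L2sq L (wt m' (dPsi 1 (dS k' h))) + L2sq L (wt m' (dPsi 2 (dS k' h))))

/-- The `X_{k,m}` norm. -/
noncomputable def Xnorm (L : ℝ) (k m : ℕ) (h : ℝ → ℝ → ℝ) : ℝ :=
  Real.sqrt (XnormSq L k m h)

/-- Membership in the space `X_{k,m}`: all the defining integrands are integrable. -/
def XFinite (L : ℝ) (k m : ℕ) (h : ℝ → ℝ → ℝ) : Prop :=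
  ∀ k' ≤ k, ∀ m' ≤ m,
    FiniteL2 L (wt m' (dS k' h)) ∧ FiniteL2 L (wt m' (dS (k'+1) h))
      ∧ FiniteL2 L (wt m' (dPsi 1 (dS k' h))) ∧ FiniteL2 L (wt m' (dPsi 2 (dS k' h)))

/-- Joint smoothness of a curried function of two real variables. -/
def Smooth2 (h : ℝ → ℝ → ℝ) : Prop :=
  ContDiff ℝ (⊤ : ℕ∞) (fun p : ℝ × ℝ => h p.1 p.2)

/-- Periodicity in the first (tangential) variable. -/
def PeriodicS (L : ℝ) (h : ℝ → ℝ → ℝ) : Prop :=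
  ∀ ψ : ℝ, Function.Periodic (fun s => h s ψ) L

/-- Squared `H^n` norm of a function on `𝕋_L`. -/
noncomputable def HnormSq (L : ℝ) (n : ℕ) (b : ℝ → ℝ) : ℝ :=
  ∑ j ∈ Finset.range (n+1), ∫ s in (0:ℝ)..L, (iteratedDeriv j b s) ^ 2

/-- The explicit (leading) part of the Feynman–Lagerstrom constant. -/
noncomputable def omegaBarStar (L : ℝ) (q_e g : ℝ → ℝ) (ε : ℝ) : ℝ :=
  ((1/L) * ∫ s in (0:ℝ)..L, (2 * g s * (q_e s) ^ 2 + ε * (g s) ^ 2 * q_e s))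
    / ((1/L) * ∫ s in (0:ℝ)..L, (q_e s) ^ 3)

/-- The Prandtl nonlinearity `f(Q,s;ω) = (1 − ωq_e/√(ω²q_e² + Q)) ∂_s Q`. -/
noncomputable def fNonlin (q_e : ℝ → ℝ) (ω : ℝ) (Q : ℝ → ℝ → ℝ) : ℝ → ℝ → ℝ :=
  fun s ψ => (1 - ω * q_e s / Real.sqrt (ω ^ 2 * (q_e s) ^ 2 + Q s ψ)) * dS 1 Q s ψ

/-!
With `a = ω' q_e` the equation reads `∂_s Q - a ∂_ψ² Q = F` on the half-cylinder. Testing it against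
`∂_ψ² Q` and `Q` with the weight `(1 + δψ)ⁿ`, where `δ` is small, controls `∂_ψ² Q` and `∂_ψ Q`: the
terms in which a derivative falls on the weight carry a factor `nδ` and are absorbed, and the
equation then controls `∂_s Q`. A Poincaré inequality in `s` bounds `Q` by `∂_s Q` up to the mean of
`a Q` over the circle. That mean is recovered from the equation itself, whose integral over the
circle is `(∫ a Q)'' = -∫ F`, so that two integrations from infinity bound it by the decay of `F`.
The derivatives `∂_s Q` and `∂_s² Q` solve equations of the same kind, now with mean zero.

The factor of `∂_s Q_prev` in `f` is `1 - 1 / √(1 + u)` with `u = Q_prev / (ω' q_e)²`, so `f` is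
quadratic in `Q_prev`. Hence `‖Q‖² ≤ C (‖Q_prev‖⁴ + ε²) ≤ ε^{1.98}` once `ε` is small.
-/

/-! ### Partial derivatives of smooth functions on the half-cylinder -/

@[simp]
theorem dS_zero (h : ℝ → ℝ → ℝ) : dS 0 h = h := by
  funext s ψ
  simp [dS]

theorem dS_one_apply (h : ℝ → ℝ → ℝ) (s ψ : ℝ) : dS 1 h s ψ = deriv (fun s' => h s' ψ) s := by
  simp [dS]

theorem dPsi_one_apply (h : ℝ → ℝ → ℝ) (s ψ : ℝ) :
    dPsi 1 h s ψ = deriv (fun ψ' => h s ψ') ψ := by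
  simp [dPsi]

theorem dS_succ (k : ℕ) (h : ℝ → ℝ → ℝ) : dS (k + 1) h = dS 1 (dS k h) := by
  funext s ψ
  rw [dS_one_apply, dS, iteratedDeriv_succ]
  rfl

theorem dPsi_two (h : ℝ → ℝ → ℝ) : dPsi 2 h = dPsi 1 (dPsi 1 h) := by
  funext s ψ
  simp only [dPsi, iteratedDeriv_succ, iteratedDeriv_zero]

namespace Smooth2

variable {u v : ℝ → ℝ → ℝ} {L : ℝ}

theorem mul (hu : Smooth2 u) (hv : Smooth2 v) : Smooth2 fun s ψ => u s ψ * v s ψ :=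
  ContDiff.mul hu hv

theorem add (hu : Smooth2 u) (hv : Smooth2 v) : Smooth2 fun s ψ => u s ψ + v s ψ :=
  ContDiff.add hu hv

theorem sub (hu : Smooth2 u) (hv : Smooth2 v) : Smooth2 fun s ψ => u s ψ - v s ψ :=
  ContDiff.sub hu hv

theorem of_fst {a : ℝ → ℝ} (ha : ContDiff ℝ (⊤ : ℕ∞) a) : Smooth2 fun s _ => a s :=
  ha.comp contDiff_fst

theorem contDiff_uncurry (hu : Smooth2 u) : ContDiff ℝ (⊤ : ℕ∞) (uncurry u) := hu

theorem continuous_uncurry (hu : Smooth2 u) : Continuous (uncurry u) :=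
  hu.contDiff_uncurry.continuous

theorem contDiff_slice (hu : Smooth2 u) (ψ : ℝ) : ContDiff ℝ (⊤ : ℕ∞) fun s => u s ψ :=
  hu.contDiff_uncurry.comp (contDiff_id.prodMk contDiff_const)

theorem contDiff_fiber (hu : Smooth2 u) (s : ℝ) : ContDiff ℝ (⊤ : ℕ∞) fun ψ => u s ψ :=
  hu.contDiff_uncurry.comp (contDiff_const.prodMk contDiff_id)

theorem hasDerivAt_dS (hu : Smooth2 u) (s ψ : ℝ) :
    HasDerivAt (fun s' => u s' ψ) (dS 1 u s ψ) s := by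
  rw [dS_one_apply]
  exact ((hu.contDiff_slice ψ).differentiable (by simp) s).hasDerivAt

theorem hasDerivAt_dPsi (hu : Smooth2 u) (s ψ : ℝ) :
    HasDerivAt (fun ψ' => u s ψ') (dPsi 1 u s ψ) ψ := by
  rw [dPsi_one_apply]
  exact ((hu.contDiff_fiber s).differentiable (by simp) ψ).hasDerivAt

theorem hasFDerivAt (hu : Smooth2 u) (p : ℝ × ℝ) :
    HasFDerivAt (uncurry u) (fderiv ℝ (uncurry u) p) p :=
  (hu.contDiff_uncurry.differentiable (by simp) p).hasFDerivAt

theorem uncurry_dS_one (hu : Smooth2 u) :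
    uncurry (dS 1 u) = fun p => fderiv ℝ (uncurry u) p (1, 0) := by
  funext ⟨s, ψ⟩
  exact (hu.hasDerivAt_dS s ψ).unique <| (hu.hasFDerivAt (s, ψ)).comp_hasDerivAt
    (f := fun s' => (s', ψ)) s ((hasDerivAt_id s).prodMk (hasDerivAt_const s ψ))

theorem uncurry_dPsi_one (hu : Smooth2 u) :
    uncurry (dPsi 1 u) = fun p => fderiv ℝ (uncurry u) p (0, 1) := by
  funext ⟨s, ψ⟩
  exact (hu.hasDerivAt_dPsi s ψ).unique <| (hu.hasFDerivAt (s, ψ)).comp_hasDerivAt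
    (f := fun ψ' => (s, ψ')) ψ ((hasDerivAt_const ψ s).prodMk (hasDerivAt_id ψ))

theorem contDiff_fderiv (hu : Smooth2 u) : ContDiff ℝ (⊤ : ℕ∞) (fderiv ℝ (uncurry u)) :=
  hu.contDiff_uncurry.fderiv_right (by simp)

theorem dS_one (hu : Smooth2 u) : Smooth2 (dS 1 u) := by
  change ContDiff ℝ _ (uncurry (_root_.dS 1 u))
  exact hu.uncurry_dS_one ▸ hu.contDiff_fderiv.clm_apply contDiff_const

theorem dPsi_one (hu : Smooth2 u) : Smooth2 (dPsi 1 u) := by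
  change ContDiff ℝ _ (uncurry (dPsi 1 u))
  exact hu.uncurry_dPsi_one ▸ hu.contDiff_fderiv.clm_apply contDiff_const

theorem dPsi_two (hu : Smooth2 u) : Smooth2 (dPsi 2 u) :=
  _root_.dPsi_two u ▸ hu.dPsi_one.dPsi_one

protected theorem dS (hu : Smooth2 u) (k : ℕ) : Smooth2 (dS k u) := by
  induction k with
  | zero => rwa [dS_zero]
  | succ k ih => exact dS_succ k u ▸ ih.dS_one

theorem dS_one_dPsi_one (hu : Smooth2 u) : dS 1 (dPsi 1 u) = dPsi 1 (dS 1 u) := by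
  funext s ψ
  have hd : DifferentiableAt ℝ (fderiv ℝ (uncurry u)) (s, ψ) :=
    hu.contDiff_fderiv.differentiable (by simp) _
  have hsymm : IsSymmSndFDerivAt ℝ (uncurry u) (s, ψ) :=
    hu.contDiff_uncurry.contDiffAt.isSymmSndFDerivAt <| by
      simpa using WithTop.coe_le_coe.2 (le_top : (2 : ℕ∞) ≤ ⊤)
  have hl := congrFun hu.dPsi_one.uncurry_dS_one (s, ψ)
  have hr := congrFun hu.dS_one.uncurry_dPsi_one (s, ψ)
  rw [hu.uncurry_dPsi_one, fderiv_clm_apply hd (differentiableAt_const _)] at hl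
  rw [hu.uncurry_dS_one, fderiv_clm_apply hd (differentiableAt_const _)] at hr
  refine hl.trans (Eq.trans ?_ hr.symm)
  simpa using hsymm.eq (1, 0) (0, 1)

theorem dS_one_dPsi_two (hu : Smooth2 u) : dS 1 (dPsi 2 u) = dPsi 2 (dS 1 u) := by
  rw [_root_.dPsi_two, _root_.dPsi_two, hu.dPsi_one.dS_one_dPsi_one, hu.dS_one_dPsi_one]

end Smooth2

namespace PeriodicS

variable {L : ℝ} {u : ℝ → ℝ → ℝ}

theorem dS_one (hu : PeriodicS L u) : PeriodicS L (dS 1 u) := by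
  intro ψ s
  have hper : (fun s' => u (s' + L) ψ) = fun s' => u s' ψ := funext (hu ψ)
  simp only [dS_one_apply]
  rw [← deriv_comp_add_const, hper]

protected theorem dS (hu : PeriodicS L u) (k : ℕ) : PeriodicS L (dS k u) := by
  induction k with
  | zero => rwa [dS_zero]
  | succ k ih => exact dS_succ k u ▸ ih.dS_one

theorem dPsi (hu : PeriodicS L u) (j : ℕ) : PeriodicS L (dPsi j u) := by
  intro ψ s
  have hper : (fun ψ' => u (s + L) ψ') = fun ψ' => u s ψ' := funext fun ψ' => hu ψ' s
  simp only [_root_.dPsi, hper]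

end PeriodicS

/-! ### Integrals over slices -/

/-- The integral of `u` over the slice at height `ψ`. -/
noncomputable def sliceInt (L : ℝ) (u : ℝ → ℝ → ℝ) (ψ : ℝ) : ℝ := ∫ s in (0 : ℝ)..L, u s ψ

/-- The `L²` pairing of the slices of `u` and `v` at height `ψ`. -/
noncomputable def sliceInner (L : ℝ) (u v : ℝ → ℝ → ℝ) : ℝ → ℝ :=
  sliceInt L fun s ψ => u s ψ * v s ψ

section Slices

variable {L : ℝ} {u v : ℝ → ℝ → ℝ} {ψ : ℝ}

theorem intervalIntegrable_slice (hu : Continuous (uncurry u)) (ψ a b : ℝ) :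
    IntervalIntegrable (fun s => u s ψ) volume a b :=
  (hu.uncurry_right ψ).intervalIntegrable a b

theorem continuous_uncurry_mul (hu : Continuous (uncurry u)) (hv : Continuous (uncurry v)) :
    Continuous (uncurry fun s ψ => u s ψ * v s ψ) :=
  hu.mul hv

theorem continuous_uncurry_fst_mul {a : ℝ → ℝ} (ha : Continuous a) (hu : Continuous (uncurry u)) :
    Continuous (uncurry fun s ψ => a s * u s ψ) :=
  (ha.comp continuous_fst).mul hu

theorem continuous_sliceInt (L : ℝ) (hu : Continuous (uncurry u)) : Continuous (sliceInt L u) :=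
  intervalIntegral.continuous_parametric_intervalIntegral_of_continuous'
    (f := fun ψ s => u s ψ) (hu.comp continuous_swap) 0 L

theorem continuous_sliceInner (L : ℝ) (hu : Continuous (uncurry u)) (hv : Continuous (uncurry v)) :
    Continuous (sliceInner L u v) :=
  continuous_sliceInt L (continuous_uncurry_mul hu hv)

theorem hasDerivAt_sliceInt (L : ℝ) (hu : Smooth2 u) (ψ : ℝ) :
    HasDerivAt (sliceInt L u) (sliceInt L (dPsi 1 u) ψ) ψ := by
  have hu' := hu.dPsi_one.continuous_uncurry
  obtain ⟨C, hC⟩ := (isCompact_uIcc.prod isCompact_Icc :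
    IsCompact (uIcc (0 : ℝ) L ×ˢ Icc (ψ - 1) (ψ + 1))).exists_bound_of_continuousOn hu'.continuousOn
  refine (intervalIntegral.hasDerivAt_integral_of_dominated_loc_of_deriv_le (μ := volume)
    (F := fun ψ s => u s ψ) (F' := fun ψ s => dPsi 1 u s ψ) (bound := fun _ => C)
    (Icc_mem_nhds (sub_one_lt ψ) (lt_add_one ψ))
    (Eventually.of_forall fun x => (hu.continuous_uncurry.uncurry_right x).aestronglyMeasurable)
    (intervalIntegrable_slice hu.continuous_uncurry _ _ _)
    (hu'.uncurry_right ψ).aestronglyMeasurable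
    (Eventually.of_forall fun s hs x hx => hC (s, x) ⟨uIoc_subset_uIcc hs, hx⟩)
    intervalIntegrable_const
    (Eventually.of_forall fun s _ x _ => hu.hasDerivAt_dPsi s x)).2

theorem sliceInt_dS_one_eq_zero (hu : Smooth2 u) (hper : PeriodicS L u) (ψ : ℝ) :
    sliceInt L (dS 1 u) ψ = 0 := by
  have hL : u L ψ = u 0 ψ := by simpa using hper ψ 0
  rw [sliceInt, intervalIntegral.integral_eq_sub_of_hasDerivAt (fun s _ => hu.hasDerivAt_dS s ψ)
    (intervalIntegrable_slice hu.dS_one.continuous_uncurry _ _ _), hL, sub_self]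

theorem sliceInt_add (hu : Continuous (uncurry u)) (hv : Continuous (uncurry v)) (ψ : ℝ) :
    sliceInt L (fun s ψ => u s ψ + v s ψ) ψ = sliceInt L u ψ + sliceInt L v ψ :=
  intervalIntegral.integral_add (intervalIntegrable_slice hu ψ 0 L)
    (intervalIntegrable_slice hv ψ 0 L)

theorem sliceInt_mono (hL : 0 ≤ L) (hu : Continuous (uncurry u)) (hv : Continuous (uncurry v))
    (h : ∀ s, u s ψ ≤ v s ψ) : sliceInt L u ψ ≤ sliceInt L v ψ :=
  intervalIntegral.integral_mono_on hL (intervalIntegrable_slice hu ψ 0 L)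
    (intervalIntegrable_slice hv ψ 0 L) fun s _ => h s

theorem sliceInner_comm (L : ℝ) (u v : ℝ → ℝ → ℝ) : sliceInner L u v = sliceInner L v u := by
  simp only [sliceInner, mul_comm]

theorem sliceInner_self_nonneg (hL : 0 ≤ L) (u : ℝ → ℝ → ℝ) (ψ : ℝ) : 0 ≤ sliceInner L u u ψ :=
  intervalIntegral.integral_nonneg hL fun _ _ => mul_self_nonneg _

theorem sliceInner_add_left {u' : ℝ → ℝ → ℝ} (hu : Continuous (uncurry u))
    (hu' : Continuous (uncurry u')) (hv : Continuous (uncurry v)) (ψ : ℝ) :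
    sliceInner L (fun s ψ => u s ψ + u' s ψ) v ψ = sliceInner L u v ψ + sliceInner L u' v ψ := by
  simp only [sliceInner, add_mul]
  exact sliceInt_add (continuous_uncurry_mul hu hv) (continuous_uncurry_mul hu' hv) ψ

theorem sliceInner_smul_left (c : ℝ) (u v : ℝ → ℝ → ℝ) (ψ : ℝ) :
    sliceInner L (fun s ψ => c * u s ψ) v ψ = c * sliceInner L u v ψ := by
  simp only [sliceInner, sliceInt, mul_assoc, intervalIntegral.integral_const_mul]

theorem sliceInner_add_smul_self (hu : Continuous (uncurry u)) (hv : Continuous (uncurry v))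
    (t ψ : ℝ) :
    sliceInner L (fun s ψ => u s ψ + t * v s ψ) (fun s ψ => u s ψ + t * v s ψ) ψ
      = sliceInner L u u ψ + 2 * t * sliceInner L u v ψ + t ^ 2 * sliceInner L v v ψ := by
  have htv : Continuous (uncurry fun s ψ => t * v s ψ) := continuous_const.mul hv
  have hw : Continuous (uncurry fun s ψ => u s ψ + t * v s ψ) := hu.add htv
  rw [sliceInner_add_left hu htv hw, sliceInner_smul_left, sliceInner_comm L u,
    sliceInner_comm L v, sliceInner_add_left hu htv hu, sliceInner_add_left hu htv hv,
    sliceInner_smul_left, sliceInner_smul_left, sliceInner_comm L v u]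
  ring

theorem sliceInner_add_self_le (hL : 0 ≤ L) (hu : Continuous (uncurry u))
    (hv : Continuous (uncurry v)) (ψ : ℝ) :
    sliceInner L (fun s ψ => u s ψ + v s ψ) (fun s ψ => u s ψ + v s ψ) ψ
      ≤ 2 * sliceInner L u u ψ + 2 * sliceInner L v v ψ := by
  have hadd := sliceInner_add_smul_self (L := L) hu hv 1 ψ
  have hsub := sliceInner_add_smul_self (L := L) hu hv (-1) ψ
  have hnonneg := sliceInner_self_nonneg hL (fun s ψ => u s ψ + -1 * v s ψ) ψ
  simp only [one_mul] at hadd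
  linarith

theorem abs_sliceInner_le (hL : 0 ≤ L) (hu : Continuous (uncurry u)) (hv : Continuous (uncurry v))
    {c : ℝ} (hc : 0 < c) (ψ : ℝ) :
    |sliceInner L u v ψ| ≤ c * sliceInner L u u ψ + 1 / (4 * c) * sliceInner L v v ψ := by
  have hpos := sliceInner_self_nonneg hL (fun s ψ => u s ψ + 1 / (2 * c) * v s ψ) ψ
  have hneg := sliceInner_self_nonneg hL (fun s ψ => u s ψ + -1 / (2 * c) * v s ψ) ψ
  rw [sliceInner_add_smul_self hu hv] at hpos hneg
  have hexpand : ∀ t : ℝ, t = 1 ∨ t = -1 → c * (sliceInner L u u ψ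
      + 2 * (t / (2 * c)) * sliceInner L u v ψ + (t / (2 * c)) ^ 2 * sliceInner L v v ψ)
      = c * sliceInner L u u ψ + t * sliceInner L u v ψ
        + 1 / (4 * c) * sliceInner L v v ψ := by
    rintro t (rfl | rfl) <;> field
  have hpos' := hexpand 1 (Or.inl rfl) ▸ mul_nonneg hc.le hpos
  have hneg' := hexpand (-1) (Or.inr rfl) ▸ mul_nonneg hc.le hneg
  rw [abs_le]
  constructor <;> linarith

theorem sliceInner_sq_le (hL : 0 ≤ L) (hu : Continuous (uncurry u)) (hv : Continuous (uncurry v))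
    (ψ : ℝ) : sliceInner L u v ψ ^ 2 ≤ sliceInner L u u ψ * sliceInner L v v ψ := by
  have hquad : ∀ t : ℝ, 0 ≤ sliceInner L v v ψ * (t * t) + 2 * sliceInner L u v ψ * t
      + sliceInner L u u ψ := fun t => by
    have h := sliceInner_add_smul_self (L := L) hu hv t ψ
    have := sliceInner_self_nonneg hL (fun s ψ => u s ψ + t * v s ψ) ψ
    linarith
  have := discrim_le_zero hquad
  rw [discrim] at this
  linarith

theorem sliceInner_self_le_of_abs_le (hL : 0 ≤ L) (hu : Continuous (uncurry u))
    (hv : Continuous (uncurry v)) {c : ℝ} (h : ∀ s, |u s ψ| ≤ c * |v s ψ|) :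
    sliceInner L u u ψ ≤ c ^ 2 * sliceInner L v v ψ := by
  rw [sliceInner, sliceInner, sliceInt, sliceInt, ← intervalIntegral.integral_const_mul]
  refine intervalIntegral.integral_mono_on hL
    (intervalIntegrable_slice (continuous_uncurry_mul hu hu) ψ 0 L)
    ((intervalIntegrable_slice (continuous_uncurry_mul hv hv) ψ 0 L).const_mul _) fun s _ => ?_
  calc u s ψ * u s ψ = |u s ψ| ^ 2 := by rw [sq_abs, sq]
    _ ≤ (c * |v s ψ|) ^ 2 := pow_le_pow_left₀ (abs_nonneg _) (h s) 2
    _ = c ^ 2 * (v s ψ * v s ψ) := by rw [mul_pow, sq_abs, sq (v s ψ)]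

theorem mul_sliceInner_self_le (hL : 0 ≤ L) {a : ℝ → ℝ} (ha : Continuous a) {c : ℝ}
    (hc : ∀ s, c ≤ a s) (hu : Continuous (uncurry u)) (ψ : ℝ) :
    c * sliceInner L u u ψ ≤ sliceInner L (fun s ψ => a s * u s ψ) u ψ := by
  rw [← sliceInner_smul_left]
  refine sliceInt_mono hL (continuous_uncurry_mul (continuous_const.mul hu) hu)
    (continuous_uncurry_mul (continuous_uncurry_fst_mul ha hu) hu) fun s => ?_
  rw [mul_assoc, mul_assoc]
  exact mul_le_mul_of_nonneg_right (hc s) (mul_self_nonneg _)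

theorem hasDerivAt_sliceInner (L : ℝ) (hu : Smooth2 u) (hv : Smooth2 v) (ψ : ℝ) :
    HasDerivAt (sliceInner L u v)
      (sliceInner L (dPsi 1 u) v ψ + sliceInner L u (dPsi 1 v) ψ) ψ := by
  refine (hasDerivAt_sliceInt L (hu.mul hv) ψ).congr_deriv (Eq.symm ?_)
  refine (sliceInt_add (continuous_uncurry_mul hu.dPsi_one.continuous_uncurry hv.continuous_uncurry)
      (continuous_uncurry_mul hu.continuous_uncurry hv.dPsi_one.continuous_uncurry) ψ).symm.trans
    (congrArg (sliceInt L · ψ) ?_)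
  funext s ψ
  exact ((hu.hasDerivAt_dPsi s ψ).mul (hv.hasDerivAt_dPsi s ψ)).unique
    ((hu.mul hv).hasDerivAt_dPsi s ψ)

theorem sliceInner_dS_one_self (hu : Smooth2 u) (hper : PeriodicS L u) (ψ : ℝ) :
    sliceInner L (dS 1 u) u ψ = 0 := by
  have hsq : dS 1 (fun s ψ => u s ψ * u s ψ)
      = fun s ψ => dS 1 u s ψ * u s ψ + dS 1 u s ψ * u s ψ := by
    funext s ψ
    rw [((hu.mul hu).hasDerivAt_dS s ψ).unique ((hu.hasDerivAt_dS s ψ).mul (hu.hasDerivAt_dS s ψ))]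
    ring
  have hcont := continuous_uncurry_mul hu.dS_one.continuous_uncurry hu.continuous_uncurry
  have h := sliceInt_dS_one_eq_zero (hu.mul hu) (fun ψ => (hper ψ).mul (hper ψ)) ψ
  rw [hsq, sliceInt_add hcont hcont] at h
  exact add_self_eq_zero.1 h

end Slices

/-! ### Weighted `L²` norms on the half-cylinder -/

/-- Weights in the normal variable admitted in the weighted `L²` norms over `(0, ∞)`. -/
structure IsWeight (w : ℝ → ℝ) : Prop where
  continuous : Continuous w
  nonneg : ∀ ψ > 0, 0 ≤ w ψ

/-- Normalised weights whose logarithmic derivative is at most `κ`; multiplying by such a weight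
almost commutes with `∂_ψ` when `κ` is small. -/
structure IsSlowWeight (κ : ℝ) (w : ℝ → ℝ) : Prop extends IsWeight w where
  apply_zero : w 0 = 1
  differentiable : Differentiable ℝ w
  abs_deriv_le : ∀ ψ > 0, |deriv w ψ| ≤ κ * w ψ

/-- The `L²` pairing over the half-cylinder with weight `w`. -/
noncomputable def wInner (L : ℝ) (w : ℝ → ℝ) (u v : ℝ → ℝ → ℝ) : ℝ :=
  ∫ ψ in Ioi (0 : ℝ), w ψ * sliceInner L u v ψ

/-- The squared `L²` norm over the half-cylinder with weight `w`. -/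
noncomputable def wNormSq (L : ℝ) (w : ℝ → ℝ) (u : ℝ → ℝ → ℝ) : ℝ := wInner L w u u

/-- Continuous functions of finite `wNormSq`. -/
structure MemWL2 (L : ℝ) (w : ℝ → ℝ) (u : ℝ → ℝ → ℝ) : Prop where
  continuous : Continuous (uncurry u)
  integrableOn : IntegrableOn (fun ψ => w ψ * sliceInner L u u ψ) (Ioi 0)

section WeightedNorms

variable {L : ℝ} {w : ℝ → ℝ} {u v : ℝ → ℝ → ℝ}

theorem IsWeight.aestronglyMeasurable_mul (hw : IsWeight w) {f : ℝ → ℝ} (hf : Continuous f) :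
    AEStronglyMeasurable (fun ψ => w ψ * f ψ) (volume.restrict (Ioi 0)) :=
  (hw.continuous.mul hf).aestronglyMeasurable

theorem wInner_comm (L : ℝ) (w : ℝ → ℝ) (u v : ℝ → ℝ → ℝ) : wInner L w u v = wInner L w v u := by
  rw [wInner, wInner, sliceInner_comm]

theorem wNormSq_nonneg (hL : 0 ≤ L) (hw : IsWeight w) (u : ℝ → ℝ → ℝ) : 0 ≤ wNormSq L w u :=
  setIntegral_nonneg measurableSet_Ioi fun ψ hψ =>
    mul_nonneg (hw.nonneg ψ hψ) (sliceInner_self_nonneg hL u ψ)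

namespace MemWL2

theorem integrableOn_mul_sliceInner (hL : 0 ≤ L) (hw : IsWeight w) (hu : MemWL2 L w u)
    (hv : MemWL2 L w v) : IntegrableOn (fun ψ => w ψ * sliceInner L u v ψ) (Ioi 0) := by
  refine Integrable.mono' (hu.integrableOn.add hv.integrableOn)
    (hw.aestronglyMeasurable_mul (continuous_sliceInner L hu.continuous hv.continuous))
    ((ae_restrict_iff' measurableSet_Ioi).2 (Eventually.of_forall fun ψ hψ => ?_))
  have hyoung := abs_sliceInner_le hL hu.continuous hv.continuous one_half_pos ψ
  have hu0 := sliceInner_self_nonneg hL u ψ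
  have hv0 := sliceInner_self_nonneg hL v ψ
  simp only [Pi.add_apply]
  rw [Real.norm_eq_abs, abs_mul, abs_of_nonneg (hw.nonneg ψ hψ), ← mul_add]
  refine mul_le_mul_of_nonneg_left ?_ (hw.nonneg ψ hψ)
  linarith

theorem of_abs_le (hL : 0 ≤ L) (hw : IsWeight w) (hv : MemWL2 L w v)
    (hu : Continuous (uncurry u)) {c : ℝ} (h : ∀ s, ∀ ψ > 0, |u s ψ| ≤ c * |v s ψ|) :
    MemWL2 L w u := by
  refine ⟨hu, Integrable.mono' (hv.integrableOn.const_mul (c ^ 2))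
    (hw.aestronglyMeasurable_mul (continuous_sliceInner L hu hu))
    ((ae_restrict_iff' measurableSet_Ioi).2 (Eventually.of_forall fun ψ hψ => ?_))⟩
  rw [Real.norm_eq_abs, abs_of_nonneg
    (mul_nonneg (hw.nonneg ψ hψ) (sliceInner_self_nonneg hL u ψ)), mul_left_comm]
  exact mul_le_mul_of_nonneg_left
    (sliceInner_self_le_of_abs_le hL hu hv.continuous fun s => h s ψ hψ) (hw.nonneg ψ hψ)

theorem abs (hL : 0 ≤ L) (hw : IsWeight w) (hu : MemWL2 L w u) :
    MemWL2 L w fun s ψ => |u s ψ| :=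
  hu.of_abs_le hL hw hu.continuous.abs (c := 1) fun s ψ _ => by rw [abs_abs, one_mul]

theorem fst_mul (hL : 0 ≤ L) (hw : IsWeight w) (hu : MemWL2 L w u) {a : ℝ → ℝ}
    (ha : Continuous a) {c : ℝ} (hc : ∀ s, |a s| ≤ c) : MemWL2 L w fun s ψ => a s * u s ψ :=
  hu.of_abs_le hL hw (continuous_uncurry_fst_mul ha hu.continuous) fun s ψ _ =>
    (abs_mul (a s) (u s ψ)).trans_le (mul_le_mul_of_nonneg_right (hc s) (abs_nonneg _))

theorem add (hL : 0 ≤ L) (hw : IsWeight w) (hu : MemWL2 L w u) (hv : MemWL2 L w v) :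
    MemWL2 L w fun s ψ => u s ψ + v s ψ := by
  have hcont : Continuous (uncurry fun s ψ => u s ψ + v s ψ) := hu.continuous.add hv.continuous
  refine ⟨hcont, Integrable.mono'
    ((hu.integrableOn.const_mul 2).add (hv.integrableOn.const_mul 2))
    (hw.aestronglyMeasurable_mul (continuous_sliceInner L hcont hcont))
    ((ae_restrict_iff' measurableSet_Ioi).2 (Eventually.of_forall fun ψ hψ => ?_))⟩
  simp only [Pi.add_apply]
  rw [Real.norm_eq_abs, abs_of_nonneg (mul_nonneg (hw.nonneg ψ hψ)
    (sliceInner_self_nonneg hL _ ψ)), mul_left_comm, mul_left_comm 2, ← mul_add]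
  exact mul_le_mul_of_nonneg_left (sliceInner_add_self_le hL hu.continuous hv.continuous ψ)
    (hw.nonneg ψ hψ)

theorem of_weight_le (hL : 0 ≤ L) (hw : IsWeight w) {w' : ℝ → ℝ} (hu : MemWL2 L w' u) {c : ℝ}
    (h : ∀ ψ > 0, w ψ ≤ c * w' ψ) : MemWL2 L w u := by
  refine ⟨hu.continuous, Integrable.mono' (hu.integrableOn.const_mul c)
    (hw.aestronglyMeasurable_mul (continuous_sliceInner L hu.continuous hu.continuous))
    ((ae_restrict_iff' measurableSet_Ioi).2 (Eventually.of_forall fun ψ hψ => ?_))⟩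
  rw [Real.norm_eq_abs, abs_of_nonneg (mul_nonneg (hw.nonneg ψ hψ)
    (sliceInner_self_nonneg hL _ ψ)), ← mul_assoc]
  exact mul_le_mul_of_nonneg_right (h ψ hψ) (sliceInner_self_nonneg hL u ψ)

end MemWL2

theorem wInner_add_left (hL : 0 ≤ L) (hw : IsWeight w) {u' : ℝ → ℝ → ℝ} (hu : MemWL2 L w u)
    (hu' : MemWL2 L w u') (hv : MemWL2 L w v) :
    wInner L w (fun s ψ => u s ψ + u' s ψ) v = wInner L w u v + wInner L w u' v := by
  rw [wInner, wInner, wInner, ← integral_add (hu.integrableOn_mul_sliceInner hL hw hv)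
    (hu'.integrableOn_mul_sliceInner hL hw hv)]
  simp only [sliceInner_add_left hu.continuous hu'.continuous hv.continuous, mul_add]

theorem abs_wInner_le (hL : 0 ≤ L) (hw : IsWeight w) (hu : MemWL2 L w u) (hv : MemWL2 L w v)
    {c : ℝ} (hc : 0 < c) :
    |wInner L w u v| ≤ c * wNormSq L w u + 1 / (4 * c) * wNormSq L w v := by
  rw [wNormSq, wNormSq, wInner, wInner, wInner, ← integral_const_mul, ← integral_const_mul,
    ← integral_add (hu.integrableOn.const_mul c) (hv.integrableOn.const_mul _)]
  refine abs_integral_le_integral_abs.trans (setIntegral_mono_on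
    (hu.integrableOn_mul_sliceInner hL hw hv).abs
    ((hu.integrableOn.const_mul c).add (hv.integrableOn.const_mul _)) measurableSet_Ioi
    fun ψ hψ => ?_)
  rw [abs_mul, abs_of_nonneg (hw.nonneg ψ hψ), mul_left_comm, mul_left_comm _ (w ψ), ← mul_add]
  exact mul_le_mul_of_nonneg_left (abs_sliceInner_le hL hu.continuous hv.continuous hc ψ)
    (hw.nonneg ψ hψ)

theorem wNormSq_le_of_abs_le (hL : 0 ≤ L) (hw : IsWeight w) (hv : MemWL2 L w v)
    (hu : Continuous (uncurry u)) {c : ℝ} (h : ∀ s, ∀ ψ > 0, |u s ψ| ≤ c * |v s ψ|) :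
    wNormSq L w u ≤ c ^ 2 * wNormSq L w v := by
  rw [wNormSq, wNormSq, wInner, wInner, ← integral_const_mul]
  refine setIntegral_mono_on (hv.of_abs_le hL hw hu h).integrableOn
    (hv.integrableOn.const_mul _) measurableSet_Ioi fun ψ hψ => ?_
  rw [mul_left_comm]
  exact mul_le_mul_of_nonneg_left
    (sliceInner_self_le_of_abs_le hL hu hv.continuous fun s => h s ψ hψ) (hw.nonneg ψ hψ)

theorem wNormSq_fst_mul_le (hL : 0 ≤ L) (hw : IsWeight w) (hu : MemWL2 L w u) {a : ℝ → ℝ}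
    (ha : Continuous a) {c : ℝ} (hc : ∀ s, |a s| ≤ c) :
    wNormSq L w (fun s ψ => a s * u s ψ) ≤ c ^ 2 * wNormSq L w u :=
  wNormSq_le_of_abs_le hL hw hu (continuous_uncurry_fst_mul ha hu.continuous) fun s ψ _ =>
    (abs_mul (a s) (u s ψ)).trans_le (mul_le_mul_of_nonneg_right (hc s) (abs_nonneg _))

theorem mul_wNormSq_le_wInner (hL : 0 ≤ L) (hw : IsWeight w) (hu : MemWL2 L w u) {a : ℝ → ℝ}
    (ha : Continuous a) {c C : ℝ} (hc : ∀ s, c ≤ a s) (hC : ∀ s, |a s| ≤ C) :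
    c * wNormSq L w u ≤ wInner L w (fun s ψ => a s * u s ψ) u := by
  rw [wNormSq, wInner, wInner, ← integral_const_mul]
  refine setIntegral_mono_on (hu.integrableOn.const_mul c)
    ((hu.fst_mul hL hw ha hC).integrableOn_mul_sliceInner hL hw hu) measurableSet_Ioi
    fun ψ hψ => ?_
  rw [mul_left_comm]
  exact mul_le_mul_of_nonneg_left (mul_sliceInner_self_le hL ha hc hu.continuous ψ)
    (hw.nonneg ψ hψ)

theorem wNormSq_add_le (hL : 0 ≤ L) (hw : IsWeight w) (hu : MemWL2 L w u) (hv : MemWL2 L w v) :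
    wNormSq L w (fun s ψ => u s ψ + v s ψ) ≤ 2 * wNormSq L w u + 2 * wNormSq L w v := by
  have huv := hu.add hL hw hv
  have hcross := (abs_le.1 (abs_wInner_le hL hw hu hv one_half_pos)).2
  rw [wNormSq, wInner_add_left hL hw hu hv huv, wInner_comm L w u, wInner_comm L w v,
    wInner_add_left hL hw hu hv hu, wInner_add_left hL hw hu hv hv, wInner_comm L w v u]
  simp only [wNormSq] at hcross ⊢
  linarith

theorem wNormSq_le_of_weight_le (hL : 0 ≤ L) (hw : IsWeight w) {w' : ℝ → ℝ}
    (hu : MemWL2 L w' u) {c : ℝ} (h : ∀ ψ > 0, w ψ ≤ c * w' ψ) :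
    wNormSq L w u ≤ c * wNormSq L w' u := by
  rw [wNormSq, wNormSq, wInner, wInner, ← integral_const_mul]
  refine setIntegral_mono_on (hu.of_weight_le hL hw h).integrableOn
    (hu.integrableOn.const_mul c) measurableSet_Ioi fun ψ hψ => ?_
  rw [← mul_assoc]
  exact mul_le_mul_of_nonneg_right (h ψ hψ) (sliceInner_self_nonneg hL u ψ)

/-- Integration by parts against a slow weight: the commutator costs only `κ`. -/
theorem IsSlowWeight.abs_mul_add_integral_le {κ x : ℝ} (hw : IsSlowWeight κ w) (hx : 0 ≤ x)
    {f f' b : ℝ → ℝ} (hf : ∀ ψ, HasDerivAt f (f' ψ) ψ) (hb : ∀ ψ, |f ψ| ≤ b ψ)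
    (hwb : IntegrableOn (fun ψ => w ψ * b ψ) (Ioi 0))
    (hwf' : IntegrableOn (fun ψ => w ψ * f' ψ) (Ioi 0)) :
    |w x * f x + ∫ ψ in Ioi x, w ψ * f' ψ| ≤ κ * ∫ ψ in Ioi x, w ψ * b ψ := by
  have hsub : Ioi x ⊆ Ioi 0 := Ioi_subset_Ioi hx
  have hfc : Continuous f := continuous_iff_continuousAt.2 fun ψ => (hf ψ).continuousAt
  have hwf'x := hwf'.mono_set hsub
  have hderiv : ∀ ψ, HasDerivAt (fun ψ => w ψ * f ψ) (deriv w ψ * f ψ + w ψ * f' ψ) ψ :=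
    fun ψ => (hw.differentiable ψ).hasDerivAt.mul (hf ψ)
  have hwf_le : ∀ ψ ∈ Ioi (0 : ℝ), ‖w ψ * f ψ‖ ≤ w ψ * b ψ := fun ψ hψ => by
    rw [Real.norm_eq_abs, abs_mul, abs_of_nonneg (hw.nonneg ψ hψ)]
    exact mul_le_mul_of_nonneg_left (hb ψ) (hw.nonneg ψ hψ)
  have hw'f_le : ∀ ψ ∈ Ioi (0 : ℝ), ‖deriv w ψ * f ψ‖ ≤ κ * (w ψ * b ψ) := fun ψ hψ => by
    rw [Real.norm_eq_abs, abs_mul, ← mul_assoc]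
    exact mul_le_mul (hw.abs_deriv_le ψ hψ) (hb ψ) (abs_nonneg _)
      ((abs_nonneg _).trans (hw.abs_deriv_le ψ hψ))
  have hae : ∀ {P : ℝ → Prop}, (∀ ψ ∈ Ioi (0 : ℝ), P ψ) → ∀ᵐ ψ ∂volume.restrict (Ioi x), P ψ :=
    fun hP => (ae_restrict_iff' measurableSet_Ioi).2 (Eventually.of_forall fun ψ h => hP ψ (hsub h))
  have hwf : IntegrableOn (fun ψ => w ψ * f ψ) (Ioi x) := Integrable.mono' (hwb.mono_set hsub)
    (hw.continuous.mul hfc).aestronglyMeasurable (hae hwf_le)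
  have hw'f : IntegrableOn (fun ψ => deriv w ψ * f ψ) (Ioi x) :=
    Integrable.mono' ((hwb.mono_set hsub).const_mul κ)
      ((measurable_deriv w).mul hfc.measurable).aestronglyMeasurable (hae hw'f_le)
  have hlim := tendsto_zero_of_hasDerivAt_of_integrableOn_Ioi (fun ψ _ => hderiv ψ)
    (hw'f.add hwf'x) hwf
  have hparts := integral_Ioi_of_hasDerivAt_of_tendsto' (fun ψ _ => hderiv ψ)
    (hw'f.add hwf'x) hlim
  rw [integral_add hw'f hwf'x] at hparts
  have hcomm : w x * f x + ∫ ψ in Ioi x, w ψ * f' ψ = -∫ ψ in Ioi x, deriv w ψ * f ψ := by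
    linarith
  rw [hcomm, abs_neg, ← integral_const_mul]
  exact norm_integral_le_of_norm_le ((hwb.mono_set hsub).const_mul κ) (hae hw'f_le)

theorem setIntegral_mul_sliceInner_self_le (hL : 0 ≤ L) (hw : IsWeight w) (hu : MemWL2 L w u)
    {x : ℝ} (hx : 0 ≤ x) : ∫ ψ in Ioi x, w ψ * sliceInner L u u ψ ≤ wNormSq L w u :=
  setIntegral_mono_set hu.integrableOn ((ae_restrict_iff' measurableSet_Ioi).2
      (Eventually.of_forall fun ψ hψ =>
        mul_nonneg (hw.nonneg ψ hψ) (sliceInner_self_nonneg hL u ψ)))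
    (Ioi_subset_Ioi hx).eventuallyLE

theorem IsSlowWeight.trace_le {κ x : ℝ} (hw : IsSlowWeight κ w) (hκ : 0 ≤ κ) (hL : 0 ≤ L)
    (hx : 0 ≤ x) (hv : Smooth2 v) (hv₀ : MemWL2 L w v) (hv₁ : MemWL2 L w (dPsi 1 v)) :
    w x * sliceInner L v v x ≤ (κ + 1) * wNormSq L w v + wNormSq L w (dPsi 1 v) := by
  have hsub : Ioi x ⊆ Ioi 0 := Ioi_subset_Ioi hx
  have hint : IntegrableOn (fun ψ => w ψ * (2 * sliceInner L (dPsi 1 v) v ψ)) (Ioi 0) :=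
    IntegrableOn.congr_fun ((hv₁.integrableOn_mul_sliceInner hL hw.toIsWeight hv₀).const_mul 2)
      (fun ψ _ => mul_left_comm _ _ _) measurableSet_Ioi
  have hparts := hw.abs_mul_add_integral_le hx (f' := fun ψ => 2 * sliceInner L (dPsi 1 v) v ψ)
    (fun ψ => (hasDerivAt_sliceInner L hv hv ψ).congr_deriv (by
      rw [sliceInner_comm L v (dPsi 1 v), two_mul]))
    (fun ψ => (abs_of_nonneg (sliceInner_self_nonneg hL v ψ)).le) hv₀.integrableOn hint
  have hcross : -∫ ψ in Ioi x, w ψ * (2 * sliceInner L (dPsi 1 v) v ψ)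
      ≤ (∫ ψ in Ioi x, w ψ * sliceInner L v v ψ)
        + ∫ ψ in Ioi x, w ψ * sliceInner L (dPsi 1 v) (dPsi 1 v) ψ := by
    rw [← integral_neg, ← integral_add (hv₀.integrableOn.mono_set hsub)
      (hv₁.integrableOn.mono_set hsub)]
    refine setIntegral_mono_on (hint.mono_set hsub).neg
      ((hv₀.integrableOn.mono_set hsub).add (hv₁.integrableOn.mono_set hsub))
      measurableSet_Ioi fun ψ hψ => ?_
    have hyoung := (abs_le.1 (abs_sliceInner_le hL hv₁.continuous hv₀.continuous
      one_half_pos ψ)).1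
    rw [← mul_add, ← mul_neg]
    refine mul_le_mul_of_nonneg_left ?_ (hw.nonneg ψ (hsub hψ))
    linarith
  have h₀ := setIntegral_mul_sliceInner_self_le hL hw.toIsWeight hv₀ hx
  have h₁ := setIntegral_mul_sliceInner_self_le hL hw.toIsWeight hv₁ hx
  have hκ₀ := mul_le_mul_of_nonneg_left h₀ hκ
  have := (abs_le.1 hparts).2
  linarith

end WeightedNorms

/-- The weight `(1 + δψ)ⁿ`. For `δ > 0` it is comparable to `(1 + ψ)ⁿ`, and its logarithmic
derivative is at most `nδ`. -/
noncomputable def polyWeight (n : ℕ) (δ ψ : ℝ) : ℝ := (1 + δ * ψ) ^ n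

section PolyWeight

variable {n : ℕ} {δ ψ : ℝ}

theorem isSlowWeight_polyWeight (n : ℕ) (hδ : 0 ≤ δ) :
    IsSlowWeight (n * δ) (polyWeight n δ) where
  continuous := by unfold polyWeight; fun_prop
  nonneg ψ hψ := by unfold polyWeight; positivity
  apply_zero := by simp [polyWeight]
  differentiable := by unfold polyWeight; fun_prop
  abs_deriv_le ψ hψ := by
    have hone : 1 ≤ 1 + δ * ψ := by nlinarith
    have hderiv : HasDerivAt (polyWeight n δ) (n * (1 + δ * ψ) ^ (n - 1) * (δ * 1)) ψ :=
      (((hasDerivAt_id ψ).const_mul δ).const_add 1).pow n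
    rw [hderiv.deriv, abs_of_nonneg (by positivity), polyWeight]
    calc n * (1 + δ * ψ) ^ (n - 1) * (δ * 1) = n * δ * (1 + δ * ψ) ^ (n - 1) := by ring
      _ ≤ n * δ * (1 + δ * ψ) ^ n := by gcongr; exact Nat.sub_le n 1

theorem isWeight_polyWeight (n : ℕ) (hδ : 0 ≤ δ) : IsWeight (polyWeight n δ) :=
  (isSlowWeight_polyWeight n hδ).toIsWeight

theorem polyWeight_le_polyWeight_one (hδ : 0 ≤ δ) (hδ' : δ ≤ 1) (hψ : 0 ≤ ψ) :
    polyWeight n δ ψ ≤ polyWeight n 1 ψ := by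
  unfold polyWeight
  gcongr

theorem pow_mul_polyWeight_one_le (hδ : 0 ≤ δ) (hδ' : δ ≤ 1) (hψ : 0 ≤ ψ) :
    δ ^ n * polyWeight n 1 ψ ≤ polyWeight n δ ψ := by
  unfold polyWeight
  rw [← mul_pow]
  gcongr
  linarith

end PolyWeight

/-! ### Energy estimate for the heat equation -/

/-- The coefficient `a` is smooth with `0 < a₀ ≤ a ≤ a₁`. -/
structure IsEllipticCoeff (a₀ a₁ : ℝ) (a : ℝ → ℝ) : Prop where
  pos : 0 < a₀
  contDiff : ContDiff ℝ (⊤ : ℕ∞) a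
  le_apply : ∀ s, a₀ ≤ a s
  apply_le : ∀ s, a s ≤ a₁

/-- `h` is a smooth solution, `L`-periodic in `s`, of `∂_s h - a(s) ∂_ψ² h = G`. The equation is
imposed for all real `ψ`, which is no restriction: off the half-cylinder it defines `G`. -/
structure IsHeatSolution (L : ℝ) (a : ℝ → ℝ) (h G : ℝ → ℝ → ℝ) : Prop where
  smooth : Smooth2 h
  periodic : PeriodicS L h
  dS_eq : ∀ s ψ, dS 1 h s ψ = a s * dPsi 2 h s ψ + G s ψ

/-- Finiteness of every term of `energy`. -/
structure MemEnergy (L : ℝ) (w : ℝ → ℝ) (h : ℝ → ℝ → ℝ) : Prop where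
  self : MemWL2 L w h
  dS_one : MemWL2 L w (dS 1 h)
  dPsi_one : MemWL2 L w (dPsi 1 h)
  dPsi_two : MemWL2 L w (dPsi 2 h)

/-- The sum of the four squared weighted norms that make up one level of the `X` norm. -/
noncomputable def energy (L : ℝ) (w : ℝ → ℝ) (h : ℝ → ℝ → ℝ) : ℝ :=
  wNormSq L w h + wNormSq L w (dS 1 h) + wNormSq L w (dPsi 1 h) + wNormSq L w (dPsi 2 h)

theorem MemEnergy.of_weight_le {L : ℝ} (hL : 0 ≤ L) {w w' : ℝ → ℝ} (hw : IsWeight w)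
    {h : ℝ → ℝ → ℝ} (hh : MemEnergy L w' h) {c : ℝ} (hc : ∀ ψ > 0, w ψ ≤ c * w' ψ) :
    MemEnergy L w h :=
  ⟨hh.self.of_weight_le hL hw hc, hh.dS_one.of_weight_le hL hw hc,
    hh.dPsi_one.of_weight_le hL hw hc, hh.dPsi_two.of_weight_le hL hw hc⟩

theorem energy_le_of_weight_le {L : ℝ} (hL : 0 ≤ L) {w w' : ℝ → ℝ} (hw : IsWeight w)
    {h : ℝ → ℝ → ℝ} (hh : MemEnergy L w' h) {c : ℝ} (hc : ∀ ψ > 0, w ψ ≤ c * w' ψ) :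
    energy L w h ≤ c * energy L w' h := by
  simp only [energy, mul_add]
  exact add_le_add (add_le_add (add_le_add
    (wNormSq_le_of_weight_le hL hw hh.self hc) (wNormSq_le_of_weight_le hL hw hh.dS_one hc))
    (wNormSq_le_of_weight_le hL hw hh.dPsi_one hc)) (wNormSq_le_of_weight_le hL hw hh.dPsi_two hc)

namespace IsEllipticCoeff

variable {a₀ a₁ : ℝ} {a : ℝ → ℝ}

theorem abs_le (ha : IsEllipticCoeff a₀ a₁ a) (s : ℝ) : |a s| ≤ a₁ :=
  (abs_of_pos (ha.pos.trans_le (ha.le_apply s))).trans_le (ha.apply_le s)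

theorem continuous (ha : IsEllipticCoeff a₀ a₁ a) : Continuous a := ha.contDiff.continuous

end IsEllipticCoeff

section EnergyEstimate

variable {L κ a₀ a₁ : ℝ} {w a : ℝ → ℝ} {h G : ℝ → ℝ → ℝ}

theorem wInner_dS_one_self (hh : Smooth2 h) (hper : PeriodicS L h) :
    wInner L w (dS 1 h) h = 0 := by
  simp [wInner, sliceInner_dS_one_self hh hper]

theorem IsSlowWeight.abs_wInner_dS_dPsi_two_le (hw : IsSlowWeight κ w) (hL : 0 ≤ L)
    (hh : Smooth2 h) (hper : PeriodicS L h) (hmem : MemEnergy L w h) :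
    |sliceInner L (dS 1 h) (dPsi 1 h) 0 + wInner L w (dS 1 h) (dPsi 2 h)|
      ≤ κ * (wNormSq L w (dS 1 h) + wNormSq L w (dPsi 1 h)) := by
  have hderiv : ∀ ψ, HasDerivAt (sliceInner L (dS 1 h) (dPsi 1 h))
      (sliceInner L (dS 1 h) (dPsi 2 h) ψ) ψ := fun ψ =>
    (hasDerivAt_sliceInner L hh.dS_one hh.dPsi_one ψ).congr_deriv <| by
      rw [← hh.dS_one_dPsi_one, sliceInner_dS_one_self hh.dPsi_one (hper.dPsi 1), zero_add,
        dPsi_two]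
  have hyoung : ∀ ψ, |sliceInner L (dS 1 h) (dPsi 1 h) ψ|
      ≤ sliceInner L (dS 1 h) (dS 1 h) ψ + sliceInner L (dPsi 1 h) (dPsi 1 h) ψ := fun ψ => by
    have := abs_sliceInner_le hL hmem.dS_one.continuous hmem.dPsi_one.continuous one_half_pos ψ
    have := sliceInner_self_nonneg hL (dS 1 h) ψ
    have := sliceInner_self_nonneg hL (dPsi 1 h) ψ
    linarith
  have hint : IntegrableOn (fun ψ => w ψ * (sliceInner L (dS 1 h) (dS 1 h) ψ
      + sliceInner L (dPsi 1 h) (dPsi 1 h) ψ)) (Ioi 0) := by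
    simp only [mul_add]
    exact hmem.dS_one.integrableOn.add hmem.dPsi_one.integrableOn
  have hmain := hw.abs_mul_add_integral_le le_rfl hderiv hyoung hint
    (hmem.dS_one.integrableOn_mul_sliceInner hL hw.toIsWeight hmem.dPsi_two)
  rw [hw.apply_zero, one_mul] at hmain
  refine hmain.trans_eq ?_
  simp only [mul_add, integral_add hmem.dS_one.integrableOn hmem.dPsi_one.integrableOn, wNormSq,
    wInner]

theorem IsSlowWeight.abs_wInner_dPsi_add_le (hw : IsSlowWeight κ w) (hL : 0 ≤ L)
    (ha : IsEllipticCoeff a₀ a₁ a) (hh : Smooth2 h) (hmem : MemEnergy L w h) :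
    |sliceInner L (fun s ψ => a s * h s ψ) (dPsi 1 h) 0
        + (wInner L w (fun s ψ => a s * dPsi 1 h s ψ) (dPsi 1 h)
          + wInner L w (fun s ψ => a s * h s ψ) (dPsi 2 h))|
      ≤ κ * (a₁ ^ 2 * wNormSq L w h + wNormSq L w (dPsi 1 h)) := by
  have hah := hmem.self.fst_mul hL hw.toIsWeight ha.continuous ha.abs_le
  have hah' := hmem.dPsi_one.fst_mul hL hw.toIsWeight ha.continuous ha.abs_le
  have hsm : Smooth2 fun s ψ => a s * h s ψ := (Smooth2.of_fst ha.contDiff).mul hh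
  have hdPsi : dPsi 1 (fun s ψ => a s * h s ψ) = fun s ψ => a s * dPsi 1 h s ψ := by
    funext s ψ
    exact (hsm.hasDerivAt_dPsi s ψ).unique ((hh.hasDerivAt_dPsi s ψ).const_mul (a s))
  have hderiv : ∀ ψ, HasDerivAt (sliceInner L (fun s ψ => a s * h s ψ) (dPsi 1 h))
      (sliceInner L (fun s ψ => a s * dPsi 1 h s ψ) (dPsi 1 h) ψ
        + sliceInner L (fun s ψ => a s * h s ψ) (dPsi 2 h) ψ) ψ := fun ψ =>
    (hasDerivAt_sliceInner L hsm hh.dPsi_one ψ).congr_deriv (by rw [hdPsi, dPsi_two])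
  have hyoung : ∀ ψ, |sliceInner L (fun s ψ => a s * h s ψ) (dPsi 1 h) ψ|
      ≤ a₁ ^ 2 * sliceInner L h h ψ + sliceInner L (dPsi 1 h) (dPsi 1 h) ψ := fun ψ => by
    have := abs_sliceInner_le hL hah.continuous hmem.dPsi_one.continuous one_half_pos ψ
    have := sliceInner_self_le_of_abs_le (ψ := ψ) hL hah.continuous hmem.self.continuous fun s =>
      (abs_mul (a s) (h s ψ)).trans_le (mul_le_mul_of_nonneg_right (ha.abs_le s) (abs_nonneg _))
    have := sliceInner_self_nonneg hL (fun s ψ => a s * h s ψ) ψ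
    have := sliceInner_self_nonneg hL (dPsi 1 h) ψ
    linarith
  have hint₀ := hmem.self.integrableOn.const_mul (a₁ ^ 2)
  have hint₁ := hah'.integrableOn_mul_sliceInner hL hw.toIsWeight hmem.dPsi_one
  have hint₂ := hah.integrableOn_mul_sliceInner hL hw.toIsWeight hmem.dPsi_two
  have hint : IntegrableOn (fun ψ => w ψ * (a₁ ^ 2 * sliceInner L h h ψ
      + sliceInner L (dPsi 1 h) (dPsi 1 h) ψ)) (Ioi 0) := by
    simp only [mul_add, mul_left_comm (w _)]
    exact hint₀.add hmem.dPsi_one.integrableOn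
  have hmain := hw.abs_mul_add_integral_le le_rfl hderiv hyoung hint
    (by simp only [mul_add]; exact hint₁.add hint₂)
  simp only [mul_add, mul_left_comm (w _), integral_add hint₀ hmem.dPsi_one.integrableOn,
    integral_add hint₁ hint₂, integral_const_mul, hw.apply_zero, one_mul] at hmain
  simpa only [wNormSq, wInner, mul_add] using hmain

/-- The equation tested against `∂_ψ² h`. -/
theorem IsHeatSolution.mul_wNormSq_dPsi_two_le (hsol : IsHeatSolution L a h G)
    (hw : IsSlowWeight κ w) (hκ : 0 < κ) (hL : 0 ≤ L) (ha : IsEllipticCoeff a₀ a₁ a)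
    (hmem : MemEnergy L w h) (hG : MemWL2 L w G) :
    a₀ * wNormSq L w (dPsi 2 h) ≤ κ * sliceInner L (dPsi 1 h) (dPsi 1 h) 0
      + 1 / (4 * κ) * sliceInner L (dS 1 h) (dS 1 h) 0
      + κ * (wNormSq L w (dS 1 h) + wNormSq L w (dPsi 1 h))
      + (1 / a₀ * wNormSq L w G + a₀ / 4 * wNormSq L w (dPsi 2 h)) := by
  have htest : wInner L w (dS 1 h) (dPsi 2 h)
      = wInner L w (fun s ψ => a s * dPsi 2 h s ψ) (dPsi 2 h) + wInner L w G (dPsi 2 h) := by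
    rw [← wInner_add_left hL hw.toIsWeight
      (hmem.dPsi_two.fst_mul hL hw.toIsWeight ha.continuous ha.abs_le) hG hmem.dPsi_two]
    exact congrArg (wInner L w · _) (funext₂ hsol.dS_eq)
  have hcoer := mul_wNormSq_le_wInner hL hw.toIsWeight hmem.dPsi_two ha.continuous ha.le_apply
    ha.abs_le
  have hparts := (abs_le.1 (hw.abs_wInner_dS_dPsi_two_le hL hsol.smooth hsol.periodic hmem)).2
  have hbdry := (abs_le.1
    (abs_sliceInner_le hL hmem.dPsi_one.continuous hmem.dS_one.continuous hκ 0)).1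
  have hforce := (abs_le.1 (abs_wInner_le hL hw.toIsWeight hG hmem.dPsi_two
    (one_div_pos.2 ha.pos))).1
  have hquarter : 1 / (4 * (1 / a₀)) = a₀ / 4 := by field
  rw [sliceInner_comm L (dPsi 1 h) (dS 1 h)] at hbdry
  rw [hquarter] at hforce
  linarith

/-- The equation tested against `h`. -/
theorem IsHeatSolution.mul_wNormSq_dPsi_one_le (hsol : IsHeatSolution L a h G)
    (hw : IsSlowWeight κ w) (hκ : 0 < κ) (hL : 0 ≤ L) (ha : IsEllipticCoeff a₀ a₁ a)
    (hmem : MemEnergy L w h) (hG : MemWL2 L w G) :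
    a₀ * wNormSq L w (dPsi 1 h) ≤ κ * sliceInner L (dPsi 1 h) (dPsi 1 h) 0
      + 1 / (4 * κ) * (a₁ ^ 2 * sliceInner L h h 0)
      + κ * (a₁ ^ 2 * wNormSq L w h + wNormSq L w (dPsi 1 h))
      + (κ * wNormSq L w h + 1 / (4 * κ) * wNormSq L w G) := by
  have hah := hmem.self.fst_mul hL hw.toIsWeight ha.continuous ha.abs_le
  have htest : wInner L w (fun s ψ => a s * h s ψ) (dPsi 2 h) + wInner L w h G = 0 := by
    have hmove : wInner L w (fun s ψ => a s * h s ψ) (dPsi 2 h)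
        = wInner L w (fun s ψ => a s * dPsi 2 h s ψ) h := by
      simp only [wInner, sliceInner, mul_right_comm _ (h _ _)]
    rw [hmove, wInner_comm L w h, ← wInner_add_left hL hw.toIsWeight
      (hmem.dPsi_two.fst_mul hL hw.toIsWeight ha.continuous ha.abs_le) hG hmem.self,
      ← wInner_dS_one_self (w := w) hsol.smooth hsol.periodic]
    exact congrArg (wInner L w · h) (funext₂ hsol.dS_eq).symm
  have hcoer := mul_wNormSq_le_wInner hL hw.toIsWeight hmem.dPsi_one ha.continuous ha.le_apply
    ha.abs_le
  have hparts := (abs_le.1 (hw.abs_wInner_dPsi_add_le hL ha hsol.smooth hmem)).2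
  have hbdry := (abs_le.1 (abs_sliceInner_le hL hmem.dPsi_one.continuous hah.continuous hκ 0)).1
  have hcoeff := sliceInner_self_le_of_abs_le (ψ := 0) hL hah.continuous hmem.self.continuous
    fun s => (abs_mul (a s) (h s 0)).trans_le
      (mul_le_mul_of_nonneg_right (ha.abs_le s) (abs_nonneg _))
  have hcoeff' := mul_le_mul_of_nonneg_left hcoeff (one_div_pos.2 (mul_pos four_pos hκ)).le
  have hforce := (abs_le.1 (abs_wInner_le hL hw.toIsWeight hmem.self hG hκ)).2
  rw [sliceInner_comm L (dPsi 1 h) fun s ψ => a s * h s ψ] at hbdry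
  linarith

theorem IsHeatSolution.wNormSq_dS_one_le (hsol : IsHeatSolution L a h G) (hw : IsWeight w)
    (hL : 0 ≤ L) (ha : IsEllipticCoeff a₀ a₁ a) (hmem : MemWL2 L w (dPsi 2 h))
    (hG : MemWL2 L w G) :
    wNormSq L w (dS 1 h) ≤ 2 * a₁ ^ 2 * wNormSq L w (dPsi 2 h) + 2 * wNormSq L w G := by
  have hadd := wNormSq_add_le hL hw (hmem.fst_mul hL hw ha.continuous ha.abs_le) hG
  have hcoeff := wNormSq_fst_mul_le hL hw hmem ha.continuous ha.abs_le
  rw [← (funext₂ hsol.dS_eq : dS 1 h = _)] at hadd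
  linarith

end EnergyEstimate

/-- `A`, `E`, `C`, `D` stand for the squared weighted norms of `h`, `∂_s h`, `∂_ψ h`, `∂_ψ² h`, `T`
for the squared norm of the trace of `∂_ψ h`, and `R` for the data. -/
theorem exists_sum_le_of_absorption {a₀ a₁ κ P : ℝ} (ha₀ : 0 < a₀) (hκ : 0 < κ) (hP : 0 ≤ P)
    (hsmall : κ * (6 + 2 * a₁ ^ 2 * (1 + (a₁ ^ 2 + 1) * P)) ≤ a₀ / 4) :
    ∃ K > 0, ∀ A E C D T R : ℝ, 0 ≤ C → 0 ≤ D →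
      a₀ * D ≤ κ * T + 1 / (4 * κ) * R + κ * (E + C) + (1 / a₀ * R + a₀ / 4 * D) →
      a₀ * C ≤ κ * T + 1 / (4 * κ) * (a₁ ^ 2 * R) + κ * (a₁ ^ 2 * A + C)
        + (κ * A + 1 / (4 * κ) * R) →
      T ≤ 2 * C + D → A ≤ P * E + R → E ≤ 2 * a₁ ^ 2 * D + 2 * R →
      A + E + C + D ≤ K * R := by
  set c := 1 / (4 * κ) * (2 + a₁ ^ 2) + 1 / a₀ + κ * (a₁ ^ 2 + 1)
    + 2 * κ * (1 + (a₁ ^ 2 + 1) * P) with hc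
  have : 0 < c := by positivity
  refine ⟨(1 + 2 * a₁ ^ 2 * (P + 1)) * (2 / a₀ * c) + (2 * (P + 1) + 1), by positivity,
    fun A E C D T R hC hD hD_le hC_le hT hA hE => ?_⟩
  have hκA := mul_le_mul_of_nonneg_left hA (by positivity : 0 ≤ κ * (a₁ ^ 2 + 1))
  have hκE := mul_le_mul_of_nonneg_left hE (by positivity : 0 ≤ κ * (1 + (a₁ ^ 2 + 1) * P))
  have hκT := mul_le_mul_of_nonneg_left hT hκ.le
  have habsorb := mul_le_mul_of_nonneg_right hsmall (add_nonneg hC hD)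
  have hκa := mul_nonneg (by positivity : 0 ≤ κ * (2 * a₁ ^ 2 * (1 + (a₁ ^ 2 + 1) * P))) hC
  have hsum : a₀ / 2 * (C + D) ≤ c * R := by
    rw [hc]
    nlinarith [mul_nonneg hκ.le hC, mul_nonneg hκ.le hD]
  have hCD : C + D ≤ 2 / a₀ * c * R := by
    calc C + D = 2 / a₀ * (a₀ / 2 * (C + D)) := by field
      _ ≤ 2 / a₀ * (c * R) := by gcongr
      _ = 2 / a₀ * c * R := by ring
  have hD' : D ≤ 2 / a₀ * c * R := by linarith
  have hE' := mul_le_mul_of_nonneg_left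
    (hE.trans (add_le_add_left (mul_le_mul_of_nonneg_left hD' (by positivity)) (2 * R)))
    (by linarith : 0 ≤ P + 1)
  linarith

theorem IsSlowWeight.mono {κ κ' : ℝ} {w : ℝ → ℝ} (hw : IsSlowWeight κ w) (hκ : κ ≤ κ') :
    IsSlowWeight κ' w where
  toIsWeight := hw.toIsWeight
  apply_zero := hw.apply_zero
  differentiable := hw.differentiable
  abs_deriv_le ψ hψ :=
    (hw.abs_deriv_le ψ hψ).trans (mul_le_mul_of_nonneg_right hκ (hw.nonneg ψ hψ))

theorem IsSlowWeight.exists_energy_le {L a₀ a₁ κ P : ℝ} (hL : 0 ≤ L) (ha₀ : 0 < a₀)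
    (hκ : 0 < κ) (hκ' : κ ≤ 1) (hP : 0 ≤ P)
    (hsmall : κ * (6 + 2 * a₁ ^ 2 * (1 + (a₁ ^ 2 + 1) * P)) ≤ a₀ / 4) :
    ∃ K > 0, ∀ {w a : ℝ → ℝ} {h G : ℝ → ℝ → ℝ} {R : ℝ}, IsSlowWeight κ w →
      IsEllipticCoeff a₀ a₁ a → IsHeatSolution L a h G → MemEnergy L w h → MemWL2 L w G →
      wNormSq L w h ≤ P * wNormSq L w (dS 1 h) + R → wNormSq L w G ≤ R →
      sliceInner L h h 0 ≤ R → sliceInner L (dS 1 h) (dS 1 h) 0 ≤ R → energy L w h ≤ K * R := by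
  obtain ⟨K, hK, hsum⟩ := exists_sum_le_of_absorption ha₀ hκ hP hsmall
  refine ⟨K, hK, fun {w a h G R} hw ha hsol hmem hG hpoin hGR hbdry hbdry' => ?_⟩
  have htrace := hw.trace_le hκ.le hL le_rfl hsol.smooth.dPsi_one hmem.dPsi_one
    (by rw [← dPsi_two]; exact hmem.dPsi_two)
  rw [hw.apply_zero, one_mul, ← dPsi_two] at htrace
  have hdPsi_one := wNormSq_nonneg hL hw.toIsWeight (dPsi 1 h)
  have hκdPsi := mul_le_mul_of_nonneg_right hκ' hdPsi_one
  refine hsum _ _ _ _ (sliceInner L (dPsi 1 h) (dPsi 1 h) 0) R hdPsi_one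
    (wNormSq_nonneg hL hw.toIsWeight (dPsi 2 h)) ?_ ?_ (by linarith) hpoin ?_
  · refine (hsol.mul_wNormSq_dPsi_two_le hw hκ hL ha hmem hG).trans ?_
    gcongr
  · refine (hsol.mul_wNormSq_dPsi_one_le hw hκ hL ha hmem hG).trans ?_
    gcongr
  · refine (hsol.wNormSq_dS_one_le hw.toIsWeight hL ha hmem.dPsi_two hG).trans ?_
    gcongr

theorem tendsto_div_one_add_pow_atTop {n : ℕ} (hn : n ≠ 0) (c : ℝ) :
    Tendsto (fun ψ : ℝ => c / (1 + ψ) ^ n) atTop (nhds 0) :=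
  tendsto_const_nhds.div_atTop
    ((tendsto_pow_atTop hn).comp (tendsto_atTop_add_const_left _ _ tendsto_id))

theorem hasDerivAt_div_one_add_pow (n : ℕ) (c : ℝ) {ψ : ℝ} (hψ : 0 ≤ ψ) :
    HasDerivAt (fun ψ : ℝ => c / (1 + ψ) ^ n) (-(n * c / (1 + ψ) ^ (n + 1))) ψ := by
  have : 0 < 1 + ψ := by linarith
  have hpow := ((hasDerivAt_id ψ).const_add 1).fun_pow n
  refine ((hasDerivAt_const ψ c).fun_div hpow (by positivity)).congr_deriv ?_
  cases n with
  | zero => simp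
  | succ n => simp only [id, Nat.add_sub_cancel]; field_simp; ring

theorem integrableOn_one_div_one_add_sq : IntegrableOn (fun ψ : ℝ => 1 / (1 + ψ) ^ 2) (Ioi 0) :=
  integrableOn_Ioi_deriv_of_nonneg' (g := fun ψ => -(1 / (1 + ψ) ^ 1))
    (fun ψ hψ => (hasDerivAt_div_one_add_pow 1 1 hψ).neg.congr_deriv (by simp))
    (fun _ _ => by positivity) (tendsto_div_one_add_pow_atTop one_ne_zero 1).neg

theorem setIntegral_one_div_one_add_sq : ∫ ψ in Ioi (0 : ℝ), 1 / (1 + ψ) ^ 2 = 1 := by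
  rw [integral_Ioi_of_hasDerivAt_of_nonneg' (g := fun ψ => -(1 / (1 + ψ) ^ 1))
    (fun ψ hψ => (hasDerivAt_div_one_add_pow 1 1 hψ).neg.congr_deriv (by simp))
    (fun _ _ => by positivity) (tendsto_div_one_add_pow_atTop one_ne_zero 1).neg]
  norm_num

theorem wNormSq_polyWeight_le_of_sliceInner_le {L P R δ : ℝ} {n : ℕ} {u v : ℝ → ℝ → ℝ}
    (hδ : 0 ≤ δ) (hδ' : δ ≤ 1) (hR : 0 ≤ R) (hu : MemWL2 L (polyWeight n δ) u)
    (hv : MemWL2 L (polyWeight n δ) v)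
    (h : ∀ ψ > 0, sliceInner L u u ψ ≤ P * sliceInner L v v ψ + R / (1 + ψ) ^ (n + 2)) :
    wNormSq L (polyWeight n δ) u ≤ P * wNormSq L (polyWeight n δ) v + R := by
  have hv' := hv.integrableOn.const_mul P
  have htail := integrableOn_one_div_one_add_sq.const_mul R
  calc wNormSq L (polyWeight n δ) u
      ≤ ∫ ψ in Ioi (0 : ℝ), (P * (polyWeight n δ ψ * sliceInner L v v ψ)
          + R * (1 / (1 + ψ) ^ 2)) := by
        refine setIntegral_mono_on hu.integrableOn (hv'.add htail) measurableSet_Ioi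
          fun ψ hψ => ?_
        have hψ : 0 < ψ := hψ
        have hw : 0 ≤ polyWeight n δ ψ := (isWeight_polyWeight n hδ).nonneg ψ hψ
        calc polyWeight n δ ψ * sliceInner L u u ψ
            ≤ polyWeight n δ ψ * (P * sliceInner L v v ψ + R / (1 + ψ) ^ (n + 2)) := by
              gcongr; exact h ψ hψ
          _ = P * (polyWeight n δ ψ * sliceInner L v v ψ)
              + polyWeight n δ ψ * (R / (1 + ψ) ^ (n + 2)) := by ring
          _ ≤ P * (polyWeight n δ ψ * sliceInner L v v ψ)
              + (1 + ψ) ^ n * (R / (1 + ψ) ^ (n + 2)) := by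
              gcongr
              simpa only [polyWeight, one_mul] using polyWeight_le_polyWeight_one hδ hδ' hψ.le
          _ = _ := by field
    _ = P * wNormSq L (polyWeight n δ) v + R := by
        rw [integral_add hv' htail, integral_const_mul, integral_const_mul,
          setIntegral_one_div_one_add_sq, mul_one, wNormSq, wInner]

theorem exists_isSlowWeight_polyWeight {κ : ℝ} (hκ : 0 < κ) (hκ' : κ ≤ 1) (n : ℕ) :
    ∃ δ, 0 < δ ∧ δ ≤ 1 ∧ IsSlowWeight κ (polyWeight n δ) := by
  refine ⟨κ / (n + 1), by positivity, (div_le_self hκ.le (by simp)).trans hκ',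
    (isSlowWeight_polyWeight n (by positivity)).mono ?_⟩
  calc n * (κ / (n + 1)) = n / (n + 1) * κ := by ring
    _ ≤ 1 * κ := by gcongr; rw [div_le_one (by positivity)]; linarith
    _ = κ := one_mul κ

/-- The smallness of the logarithmic derivative of the weight is bought by passing from
`(1 + ψ)ⁿ` to the equivalent weight `(1 + δψ)ⁿ`. -/
theorem exists_energy_polyWeight_le {L a₀ P : ℝ} (hL : 0 ≤ L) (ha₀ : 0 < a₀) (hP : 0 ≤ P)
    (a₁ : ℝ) (n : ℕ) :
    ∃ K > 0, ∀ {a : ℝ → ℝ} {h G : ℝ → ℝ → ℝ} {R : ℝ}, IsEllipticCoeff a₀ a₁ a →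
      IsHeatSolution L a h G → MemEnergy L (polyWeight n 1) h → MemWL2 L (polyWeight n 1) G →
      (∀ ψ > 0, sliceInner L h h ψ
        ≤ P * sliceInner L (dS 1 h) (dS 1 h) ψ + R / (1 + ψ) ^ (n + 2)) →
      wNormSq L (polyWeight n 1) G ≤ R → sliceInner L h h 0 ≤ R →
      sliceInner L (dS 1 h) (dS 1 h) 0 ≤ R → energy L (polyWeight n 1) h ≤ K * R := by
  set c := 6 + 2 * a₁ ^ 2 * (1 + (a₁ ^ 2 + 1) * P)
  have hc : 1 ≤ c := by
    have : 0 ≤ 2 * a₁ ^ 2 * (1 + (a₁ ^ 2 + 1) * P) := by positivity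
    linarith
  set κ := min 1 (a₀ / 4 / c)
  have hκ : 0 < κ := by positivity
  obtain ⟨δ, hδ, hδ', hslow⟩ := exists_isSlowWeight_polyWeight hκ (min_le_left _ _) n
  obtain ⟨K, hK, henergy⟩ := IsSlowWeight.exists_energy_le hL ha₀ hκ (min_le_left _ _) hP
    ((le_div_iff₀ (by linarith)).1 (min_le_right 1 (a₀ / 4 / c)))
  refine ⟨K / δ ^ n, by positivity,
    fun {a h G R} ha hsol hmem hG hpoin hGR hbdry hbdry' => ?_⟩
  have hw := isWeight_polyWeight n hδ.le
  have hle : ∀ ψ > 0, polyWeight n δ ψ ≤ 1 * polyWeight n 1 ψ := fun ψ hψ =>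
    (polyWeight_le_polyWeight_one hδ.le hδ' hψ.le).trans_eq (one_mul _).symm
  have hmem' := hmem.of_weight_le hL hw hle
  have hG' := wNormSq_le_of_weight_le hL hw hG hle
  have hmain := henergy hslow ha hsol hmem'
    (hG.of_weight_le hL hw hle) (wNormSq_polyWeight_le_of_sliceInner_le hδ.le hδ'
      ((sliceInner_self_nonneg hL h 0).trans hbdry) hmem'.self hmem'.dS_one hpoin)
    (by linarith) hbdry hbdry'
  refine (energy_le_of_weight_le hL (isWeight_polyWeight n zero_le_one) hmem'
    (c := 1 / δ ^ n) fun ψ hψ => ?_).trans ?_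
  · rw [one_div_mul_eq_div, le_div_iff₀' (by positivity)]
    exact pow_mul_polyWeight_one_le hδ.le hδ' (le_of_lt hψ)
  · rw [one_div_mul_eq_div, div_mul_eq_mul_div]
    gcongr

/-! ### Poincaré and Sobolev inequalities on slices -/

theorem abs_sub_le_integral_abs {L s t : ℝ} (hL : 0 ≤ L) {f f' : ℝ → ℝ}
    (hf : ∀ x, HasDerivAt f (f' x) x) (hf' : Continuous f') (hs : s ∈ Icc 0 L)
    (ht : t ∈ Icc 0 L) : |f s - f t| ≤ ∫ x in (0 : ℝ)..L, |f' x| := by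
  rw [← intervalIntegral.integral_eq_sub_of_hasDerivAt (fun x _ => hf x)
    (hf'.intervalIntegrable t s), intervalIntegral.integral_of_le hL]
  refine (intervalIntegral.norm_integral_le_integral_norm_uIoc (f := f')).trans
    (setIntegral_mono_set hf'.abs.integrableOn_Ioc
      (Eventually.of_forall fun _ => abs_nonneg _)
      (Ioc_subset_Ioc (le_min ht.1 hs.1) (max_le ht.2 hs.2)).eventuallyLE)

section Slices

variable {L : ℝ} {v : ℝ → ℝ → ℝ} {a : ℝ → ℝ} {ψ : ℝ}

theorem sliceInt_fst_mul_sq_le {c : ℝ} (hL : 0 ≤ L) (ha : Continuous a) (hc : ∀ s, |a s| ≤ c)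
    (hv : Continuous (uncurry v)) (ψ : ℝ) :
    sliceInt L (fun s ψ => a s * v s ψ) ψ ^ 2 ≤ L * c ^ 2 * sliceInner L v v ψ := by
  have hcs := sliceInner_sq_le (u := fun s _ => a s) hL (ha.comp continuous_fst) hv ψ
  have hone := sliceInner_self_le_of_abs_le (u := fun s _ => a s) (v := fun _ _ => 1) (ψ := ψ)
    (c := c) hL (ha.comp continuous_fst) continuous_const fun s => by simpa using hc s
  refine hcs.trans (mul_le_mul_of_nonneg_right (hone.trans_eq ?_) (sliceInner_self_nonneg hL v ψ))
  simp [sliceInner, sliceInt, mul_comm]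

theorem abs_mul_integral_sub_sliceInt_le {s : ℝ} (hL : 0 ≤ L) (hv : Smooth2 v)
    (ha : Continuous a) (ha₀ : ∀ s, 0 ≤ a s) (ψ : ℝ) (hs : s ∈ Icc 0 L) :
    |v s ψ * (∫ t in (0 : ℝ)..L, a t) - sliceInt L (fun s ψ => a s * v s ψ) ψ|
      ≤ sliceInt L (fun s ψ => |dS 1 v s ψ|) ψ * ∫ t in (0 : ℝ)..L, a t := by
  have hvc := hv.continuous_uncurry.uncurry_right ψ
  have hdiff : v s ψ * (∫ t in (0 : ℝ)..L, a t) - sliceInt L (fun s ψ => a s * v s ψ) ψ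
      = ∫ t in (0 : ℝ)..L, a t * (v s ψ - v t ψ) := by
    simp only [mul_sub, sliceInt]
    rw [intervalIntegral.integral_sub (f := fun t => a t * v s ψ)
      (g := fun t => a t * v t ψ)
      ((ha.mul continuous_const).intervalIntegrable _ _) ((ha.mul hvc).intervalIntegrable _ _),
      intervalIntegral.integral_mul_const, mul_comm]
  rw [hdiff, ← intervalIntegral.integral_const_mul]
  refine (intervalIntegral.abs_integral_le_integral_abs hL).trans
    (intervalIntegral.integral_mono_on hL
      ((ha.mul (continuous_const.sub hvc)).abs.intervalIntegrable _ _)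
      ((continuous_const.mul ha).intervalIntegrable _ _) fun t ht => ?_)
  rw [abs_mul, abs_of_nonneg (ha₀ t), mul_comm]
  exact mul_le_mul_of_nonneg_right (abs_sub_le_integral_abs hL (fun x => hv.hasDerivAt_dS x ψ)
    (hv.dS_one.continuous_uncurry.uncurry_right ψ) hs ht) (ha₀ t)

theorem sq_apply_le {s : ℝ} (hL : 0 ≤ L) (hv : Smooth2 v) (ha : Continuous a)
    (ha₀ : ∀ s, 0 ≤ a s) (hpos : 0 < ∫ t in (0 : ℝ)..L, a t) (ψ : ℝ) (hs : s ∈ Icc 0 L) :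
    v s ψ ^ 2 ≤ 2 * L * sliceInner L (dS 1 v) (dS 1 v) ψ
      + 2 / (∫ t in (0 : ℝ)..L, a t) ^ 2 * sliceInt L (fun s ψ => a s * v s ψ) ψ ^ 2 := by
  have hosc := abs_mul_integral_sub_sliceInt_le hL hv ha ha₀ ψ hs
  have hcs := sliceInt_fst_mul_sq_le (v := fun s ψ => |dS 1 v s ψ|) (a := fun _ => 1) (c := 1) hL
    continuous_const (by simp) hv.dS_one.continuous_uncurry.abs ψ
  simp only [one_mul, one_pow, mul_one] at hcs
  have habs : sliceInner L (fun s ψ => |dS 1 v s ψ|) (fun s ψ => |dS 1 v s ψ|)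
      = sliceInner L (dS 1 v) (dS 1 v) := by simp only [sliceInner, abs_mul_abs_self]
  rw [habs] at hcs
  set m := ∫ t in (0 : ℝ)..L, a t
  set A := sliceInt L (fun s ψ => a s * v s ψ) ψ
  have hmean : |v s ψ - A / m| ≤ sliceInt L (fun s ψ => |dS 1 v s ψ|) ψ := by
    refine le_of_mul_le_mul_right ?_ hpos
    rw [← abs_of_pos hpos, ← abs_mul, sub_mul, abs_of_pos hpos, div_mul_cancel₀ A hpos.ne']
    exact hosc
  have hsq := sq_le_sq' (by linarith [neg_abs_le (v s ψ - A / m)]) ((le_abs_self _).trans hmean)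
  calc v s ψ ^ 2 ≤ 2 * (v s ψ - A / m) ^ 2 + 2 * (A / m) ^ 2 := by
        linarith [sq_nonneg (v s ψ - 2 * (A / m))]
    _ ≤ 2 * (L * sliceInner L (dS 1 v) (dS 1 v) ψ) + 2 * (A / m) ^ 2 := by
        gcongr
        exact hsq.trans hcs
    _ = _ := by ring

theorem sliceInner_self_le_add_sliceInt_sq (hL : 0 ≤ L) (hv : Smooth2 v) (ha : Continuous a)
    (ha₀ : ∀ s, 0 ≤ a s) (hpos : 0 < ∫ t in (0 : ℝ)..L, a t) (ψ : ℝ) :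
    sliceInner L v v ψ ≤ 2 * L ^ 2 * sliceInner L (dS 1 v) (dS 1 v) ψ
      + 2 * L / (∫ t in (0 : ℝ)..L, a t) ^ 2 * sliceInt L (fun s ψ => a s * v s ψ) ψ ^ 2 := by
  refine (intervalIntegral.integral_mono_on hL (intervalIntegrable_slice
    (continuous_uncurry_mul hv.continuous_uncurry hv.continuous_uncurry) ψ 0 L)
    intervalIntegrable_const fun s hs =>
      (sq (v s ψ)).symm.trans_le (sq_apply_le hL hv ha ha₀ hpos ψ hs)).trans_eq ?_
  rw [intervalIntegral.integral_const, smul_eq_mul]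
  ring

theorem sliceInner_self_le_of_sliceInt_eq_zero (hL : 0 < L) (hv : Smooth2 v)
    (hmean : sliceInt L v ψ = 0) :
    sliceInner L v v ψ ≤ 2 * L ^ 2 * sliceInner L (dS 1 v) (dS 1 v) ψ := by
  simpa [hmean] using sliceInner_self_le_add_sliceInt_sq (a := fun _ => 1) hL.le hv
    continuous_const (fun _ => zero_le_one) (by simpa using hL) ψ

theorem sq_apply_le_of_periodicS (hL : 0 < L) (hv : Smooth2 v) (hper : PeriodicS L v) (s ψ : ℝ) :
    v s ψ ^ 2 ≤ 2 * L * sliceInner L (dS 1 v) (dS 1 v) ψ + 2 / L * sliceInner L v v ψ := by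
  obtain ⟨t, ht, hst : v s ψ = v t ψ⟩ := (hper ψ).exists_mem_Ico₀ hL s
  have hmean := sliceInt_fst_mul_sq_le (a := fun _ => 1) (c := 1) hL.le continuous_const
    (by simp) hv.continuous_uncurry ψ
  have hpt := sq_apply_le (a := fun _ => 1) hL.le hv continuous_const (fun _ => zero_le_one)
    (by simpa using hL) ψ ⟨ht.1, ht.2.le⟩
  have hone : ∫ _ in (0 : ℝ)..L, (1 : ℝ) = L := by simp
  rw [hone] at hpt
  rw [hst]
  calc v t ψ ^ 2 ≤ _ := hpt
    _ ≤ 2 * L * sliceInner L (dS 1 v) (dS 1 v) ψ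
        + 2 / L ^ 2 * (L * 1 ^ 2 * sliceInner L v v ψ) := by gcongr
    _ = _ := by field

end Slices

/-! ### Decay of the weighted slice mean -/

theorem nonneg_of_hasDerivAt_nonpos_of_tendsto {f f' : ℝ → ℝ} {x : ℝ}
    (hf : ∀ y ≥ x, HasDerivAt f (f' y) y) (hf' : ∀ y ≥ x, f' y ≤ 0)
    (hlim : Tendsto f atTop (nhds 0)) : 0 ≤ f x := by
  have hanti : AntitoneOn f (Ici x) := by
    refine antitoneOn_of_hasDerivWithinAt_nonpos (convex_Ici x) (f' := f')
      (fun y hy => (hf y hy).continuousAt.continuousWithinAt) ?_ ?_ <;>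
    rw [interior_Ici]
    · exact fun y hy => (hf y (le_of_lt hy)).hasDerivWithinAt
    · exact fun y hy => hf' y (le_of_lt hy)
  refine le_of_tendsto hlim ?_
  filter_upwards [eventually_ge_atTop x] with y hy using hanti self_mem_Ici hy hy

theorem abs_le_div_one_add_pow_of_abs_deriv_le {f f' : ℝ → ℝ} {n : ℕ} {c x : ℝ} (hn : n ≠ 0)
    (hc : 0 ≤ c) (hf : ∀ ψ, HasDerivAt f (f' ψ) ψ)
    (hf' : ∀ ψ > 0, |f' ψ| ≤ c / (1 + ψ) ^ (n + 1)) (hlim : Tendsto f atTop (nhds 0))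
    (hx : 0 < x) : |f x| ≤ c / (1 + x) ^ n := by
  have hpow := tendsto_div_one_add_pow_atTop hn c
  have hf'' : ∀ y ≥ x, |f' y| ≤ n * c / (1 + y) ^ (n + 1) := fun y hy => by
    have hy₀ : 0 < y := hx.trans_le hy
    refine (hf' y hy₀).trans (div_le_div_of_nonneg_right (le_mul_of_one_le_left hc ?_)
      (by positivity))
    exact_mod_cast Nat.one_le_iff_ne_zero.2 hn
  have hdpow : ∀ y ≥ x, HasDerivAt (fun ψ : ℝ => c / (1 + ψ) ^ n)
      (-(n * c / (1 + y) ^ (n + 1))) y := fun y hy =>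
    hasDerivAt_div_one_add_pow n c (hx.le.trans hy)
  have hsub := nonneg_of_hasDerivAt_nonpos_of_tendsto (fun y hy => (hdpow y hy).fun_sub (hf y))
    (fun y hy => by linarith [(abs_le.1 (hf'' y hy)).1]) (by simpa using hpow.sub hlim)
  have hadd := nonneg_of_hasDerivAt_nonpos_of_tendsto (fun y hy => (hdpow y hy).fun_add (hf y))
    (fun y hy => by linarith [(abs_le.1 (hf'' y hy)).2]) (by simpa using hpow.add hlim)
  exact abs_le.2 ⟨by linarith, by linarith⟩

section ZeroMode

variable {L κ a₀ a₁ : ℝ} {n : ℕ} {a : ℝ → ℝ} {h v F : ℝ → ℝ → ℝ}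

theorem hasDerivAt_sliceInt_fst_mul (L : ℝ) (ha : ContDiff ℝ (⊤ : ℕ∞) a) (hv : Smooth2 v)
    (ψ : ℝ) : HasDerivAt (sliceInt L fun s ψ => a s * v s ψ)
      (sliceInt L (fun s ψ => a s * dPsi 1 v s ψ) ψ) ψ := by
  have hav : Smooth2 fun s ψ => a s * v s ψ := (Smooth2.of_fst ha).mul hv
  refine (hasDerivAt_sliceInt L hav ψ).congr_deriv (congrArg (sliceInt L · ψ) (funext₂ ?_))
  exact fun s ψ => (hav.hasDerivAt_dPsi s ψ).unique ((hv.hasDerivAt_dPsi s ψ).const_mul (a s))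

theorem polyWeight_mul_sliceInner_le (hL : 0 ≤ L) (hv : Smooth2 v)
    (hv₀ : MemWL2 L (polyWeight n 1) v) (hv₁ : MemWL2 L (polyWeight n 1) (dPsi 1 v)) {ψ : ℝ}
    (hψ : 0 ≤ ψ) : (1 + ψ) ^ n * sliceInner L v v ψ
      ≤ (n + 1) * wNormSq L (polyWeight n 1) v + wNormSq L (polyWeight n 1) (dPsi 1 v) := by
  simpa only [polyWeight, one_mul, mul_one] using
    (isSlowWeight_polyWeight n zero_le_one).trace_le (by positivity) hL hψ hv hv₀ hv₁

theorem tendsto_sliceInt_fst_mul_atTop {c : ℝ} (hL : 0 ≤ L) (ha : Continuous a)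
    (hc : ∀ s, |a s| ≤ c) (hn : n ≠ 0) (hv : Smooth2 v) (hv₀ : MemWL2 L (polyWeight n 1) v)
    (hv₁ : MemWL2 L (polyWeight n 1) (dPsi 1 v)) :
    Tendsto (sliceInt L fun s ψ => a s * v s ψ) atTop (nhds 0) := by
  set C := L * c ^ 2
    * ((n + 1) * wNormSq L (polyWeight n 1) v + wNormSq L (polyWeight n 1) (dPsi 1 v))
  have hsq : Tendsto (fun ψ => sliceInt L (fun s ψ => a s * v s ψ) ψ ^ 2) atTop (nhds 0) := by
    refine squeeze_zero' (Eventually.of_forall fun _ => sq_nonneg _) ?_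
      (tendsto_div_one_add_pow_atTop hn C)
    filter_upwards [eventually_ge_atTop (0 : ℝ)] with ψ hψ
    have htrace := polyWeight_mul_sliceInner_le hL hv hv₀ hv₁ hψ
    rw [le_div_iff₀' (by positivity)]
    calc (1 + ψ) ^ n * sliceInt L (fun s ψ => a s * v s ψ) ψ ^ 2
        ≤ (1 + ψ) ^ n * (L * c ^ 2 * sliceInner L v v ψ) := by
          gcongr; exact sliceInt_fst_mul_sq_le hL ha hc hv.continuous_uncurry ψ
      _ = L * c ^ 2 * ((1 + ψ) ^ n * sliceInner L v v ψ) := by ring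
      _ ≤ C := mul_le_mul_of_nonneg_left htrace (by positivity)
  rw [tendsto_zero_iff_abs_tendsto_zero]
  simpa only [comp_def, Real.sqrt_sq_eq_abs, Real.sqrt_zero] using hsq.sqrt

/-- Integrating the equation in `s` gives `(∫ a h ds)'' = -∫ F ds`, and both `∫ a h ds` and its
derivative vanish at infinity. -/
theorem IsHeatSolution.abs_sliceInt_fst_mul_le {k : ℕ} (hsol : IsHeatSolution L a h F)
    (hL : 0 ≤ L) (ha : IsEllipticCoeff a₀ a₁ a) (hk : k ≠ 0)
    (hmem : MemEnergy L (polyWeight k 1) h) (hF : Continuous (uncurry F)) (hn : n ≠ 0)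
    (hκ : 0 ≤ κ) (hdecay : ∀ ψ > 0, |sliceInt L F ψ| ≤ κ / (1 + ψ) ^ (n + 2)) {ψ : ℝ}
    (hψ : 0 < ψ) : |sliceInt L (fun s ψ => a s * h s ψ) ψ| ≤ κ / (1 + ψ) ^ n := by
  have hdPsi_two : MemWL2 L (polyWeight k 1) (dPsi 1 (dPsi 1 h)) := by
    rw [← dPsi_two]; exact hmem.dPsi_two
  have hmean : ∀ ψ, |sliceInt L (fun s ψ => a s * dPsi 1 (dPsi 1 h) s ψ) ψ|
      = |sliceInt L F ψ| := fun ψ => by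
    have hsum := sliceInt_add (L := L)
      (continuous_uncurry_fst_mul ha.continuous hmem.dPsi_two.continuous) hF ψ
    rw [← (funext₂ hsol.dS_eq : dS 1 h = _), sliceInt_dS_one_eq_zero hsol.smooth hsol.periodic,
      dPsi_two] at hsum
    rw [eq_neg_of_add_eq_zero_left hsum.symm, abs_neg]
  refine abs_le_div_one_add_pow_of_abs_deriv_le hn hκ
    (hasDerivAt_sliceInt_fst_mul L ha.contDiff hsol.smooth) (fun x hx => ?_)
    (tendsto_sliceInt_fst_mul_atTop hL ha.continuous ha.abs_le hk hsol.smooth hmem.self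
      hmem.dPsi_one) hψ
  exact abs_le_div_one_add_pow_of_abs_deriv_le n.succ_ne_zero hκ
    (hasDerivAt_sliceInt_fst_mul L ha.contDiff hsol.smooth.dPsi_one)
    (fun y hy => (hmean y).trans_le (hdecay y hy))
    (tendsto_sliceInt_fst_mul_atTop hL ha.continuous ha.abs_le hk hsol.smooth.dPsi_one
      hmem.dPsi_one hdPsi_two) hx

end ZeroMode

/-! ### Linear estimates with tangential derivatives -/

section LinearEstimate

variable {L a₀ : ℝ}

theorem IsEllipticCoeff.mul_le_integral {a₁ : ℝ} {a : ℝ → ℝ} (ha : IsEllipticCoeff a₀ a₁ a)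
    (hL : 0 ≤ L) : L * a₀ ≤ ∫ s in (0 : ℝ)..L, a s := by
  simpa using intervalIntegral.integral_mono_on (μ := volume) hL intervalIntegrable_const
    (ha.continuous.intervalIntegrable 0 L) fun s _ => ha.le_apply s

theorem exists_energy_le_of_abs_sliceInt_le (hL : 0 < L) (ha₀ : 0 < a₀) (a₁ : ℝ) {m : ℕ}
    (hm : m ≠ 0) :
    ∃ K > 0, ∀ {a : ℝ → ℝ} {h F : ℝ → ℝ → ℝ} {κ R : ℝ}, IsEllipticCoeff a₀ a₁ a →
      IsHeatSolution L a h F → MemEnergy L (polyWeight (2 * m) 1) h →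
      MemWL2 L (polyWeight (2 * m) 1) F → wNormSq L (polyWeight (2 * m) 1) F ≤ R → 0 ≤ κ →
      κ ^ 2 ≤ R → (∀ ψ > 0, |sliceInt L F ψ| ≤ κ / (1 + ψ) ^ (m + 3)) →
      sliceInner L h h 0 ≤ R → sliceInner L (dS 1 h) (dS 1 h) 0 ≤ R →
      energy L (polyWeight (2 * m) 1) h ≤ K * R := by
  obtain ⟨K, hK, henergy⟩ := exists_energy_polyWeight_le (P := 2 * L ^ 2) hL.le ha₀
    (by positivity) a₁ (2 * m)
  set c := 1 + 2 * L / (L * a₀) ^ 2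
  have hc : 1 ≤ c := le_add_of_nonneg_right (by positivity)
  refine ⟨K * c, by positivity,
    fun {a h F κ R} ha hsol hmem hF hFR hκ hκR hdecay hbdry hbdry' => ?_⟩
  have hR : R ≤ c * R := le_mul_of_one_le_left ((sq_nonneg κ).trans hκR) hc
  refine (henergy ha hsol hmem hF (fun ψ hψ => ?_) (hFR.trans hR) (hbdry.trans hR)
    (hbdry'.trans hR)).trans_eq (mul_assoc K c R).symm
  have hmean := hsol.abs_sliceInt_fst_mul_le hL.le ha (by positivity : 2 * m ≠ 0) hmem
    hF.continuous m.succ_ne_zero hκ hdecay hψ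
  have hint := ha.mul_le_integral hL.le
  calc sliceInner L h h ψ
      ≤ 2 * L ^ 2 * sliceInner L (dS 1 h) (dS 1 h) ψ
        + 2 * L / (∫ t in (0 : ℝ)..L, a t) ^ 2 * sliceInt L (fun s ψ => a s * h s ψ) ψ ^ 2 :=
        sliceInner_self_le_add_sliceInt_sq hL.le hsol.smooth ha.continuous
          (fun s => ha₀.le.trans (ha.le_apply s)) (by nlinarith [mul_pos hL ha₀]) ψ
    _ ≤ 2 * L ^ 2 * sliceInner L (dS 1 h) (dS 1 h) ψ
        + 2 * L / (L * a₀) ^ 2 * (κ / (1 + ψ) ^ (m + 1)) ^ 2 := by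
        rw [← sq_abs (sliceInt L _ ψ)]
        gcongr
    _ = 2 * L ^ 2 * sliceInner L (dS 1 h) (dS 1 h) ψ
        + 2 * L / (L * a₀) ^ 2 * κ ^ 2 / (1 + ψ) ^ (2 * m + 2) := by
        rw [div_pow, ← pow_mul, mul_div_assoc', mul_comm (m + 1), mul_add, mul_one]
    _ ≤ 2 * L ^ 2 * sliceInner L (dS 1 h) (dS 1 h) ψ + c * R / (1 + ψ) ^ (2 * m + 2) := by
        gcongr
        exact le_add_of_nonneg_left zero_le_one

theorem exists_energy_le_of_sliceInt_eq_zero (hL : 0 < L) (ha₀ : 0 < a₀) (a₁ : ℝ) (n : ℕ) :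
    ∃ K > 0, ∀ {a : ℝ → ℝ} {h F : ℝ → ℝ → ℝ} {R : ℝ}, IsEllipticCoeff a₀ a₁ a →
      IsHeatSolution L a h F → (∀ ψ, sliceInt L h ψ = 0) → MemEnergy L (polyWeight n 1) h →
      MemWL2 L (polyWeight n 1) F → wNormSq L (polyWeight n 1) F ≤ R →
      sliceInner L h h 0 ≤ R → sliceInner L (dS 1 h) (dS 1 h) 0 ≤ R →
      energy L (polyWeight n 1) h ≤ K * R := by
  obtain ⟨K, hK, henergy⟩ := exists_energy_polyWeight_le (P := 2 * L ^ 2) hL.le ha₀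
    (by positivity) a₁ n
  refine ⟨K, hK, fun {a h F R} ha hsol hmean hmem hF hFR hbdry hbdry' =>
    henergy ha hsol hmem hF (fun ψ hψ => ?_) hFR hbdry hbdry'⟩
  have hR : 0 ≤ R := (sliceInner_self_nonneg hL.le h 0).trans hbdry
  exact (sliceInner_self_le_of_sliceInt_eq_zero hL hsol.smooth (hmean ψ)).trans
    (le_add_of_nonneg_right (by positivity))

theorem dS_one_fst_mul {b : ℝ → ℝ} (hb : ContDiff ℝ (⊤ : ℕ∞) b) {u : ℝ → ℝ → ℝ}
    (hu : Smooth2 u) :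
    dS 1 (fun s ψ => b s * u s ψ) = fun s ψ => deriv b s * u s ψ + b s * dS 1 u s ψ :=
  funext₂ fun s ψ => (((Smooth2.of_fst hb).mul hu).hasDerivAt_dS s ψ).unique
    (((hb.differentiable (by simp)) s).hasDerivAt.mul (hu.hasDerivAt_dS s ψ))

theorem dS_one_add {u v : ℝ → ℝ → ℝ} (hu : Smooth2 u) (hv : Smooth2 v) :
    dS 1 (fun s ψ => u s ψ + v s ψ) = fun s ψ => dS 1 u s ψ + dS 1 v s ψ :=
  funext₂ fun s ψ => ((hu.add hv).hasDerivAt_dS s ψ).unique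
    ((hu.hasDerivAt_dS s ψ).add (hv.hasDerivAt_dS s ψ))

namespace IsHeatSolution

variable {a : ℝ → ℝ} {h F : ℝ → ℝ → ℝ}

theorem smooth_right (hsol : IsHeatSolution L a h F) (ha : ContDiff ℝ (⊤ : ℕ∞) a) :
    Smooth2 F := by
  have hF : F = fun s ψ => dS 1 h s ψ - a s * dPsi 2 h s ψ :=
    funext₂ fun s ψ => eq_sub_of_add_eq' (hsol.dS_eq s ψ).symm
  rw [hF]
  exact hsol.smooth.dS_one.sub ((Smooth2.of_fst ha).mul hsol.smooth.dPsi_two)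

theorem dS_one (hsol : IsHeatSolution L a h F) (ha : ContDiff ℝ (⊤ : ℕ∞) a) :
    IsHeatSolution L a (dS 1 h) fun s ψ => deriv a s * dPsi 2 h s ψ + dS 1 F s ψ where
  smooth := hsol.smooth.dS_one
  periodic := hsol.periodic.dS_one
  dS_eq s ψ := by
    conv_lhs => rw [(funext₂ hsol.dS_eq : dS 1 h = _)]
    rw [dS_one_add ((Smooth2.of_fst ha).mul hsol.smooth.dPsi_two) (hsol.smooth_right ha),
      dS_one_fst_mul ha hsol.smooth.dPsi_two, hsol.smooth.dS_one_dPsi_two]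
    ring

end IsHeatSolution

theorem wNormSq_dPsi_two_le_energy {w : ℝ → ℝ} (hL : 0 ≤ L) (hw : IsWeight w)
    (h : ℝ → ℝ → ℝ) : wNormSq L w (dPsi 2 h) ≤ energy L w h :=
  le_add_of_nonneg_left (add_nonneg (add_nonneg (wNormSq_nonneg hL hw _)
    (wNormSq_nonneg hL hw _)) (wNormSq_nonneg hL hw _))

theorem exists_energy_dS_one_le (hL : 0 < L) (ha₀ : 0 < a₀) (a₁ A : ℝ) (n : ℕ) :
    ∃ K > 0, ∀ {a : ℝ → ℝ} {h F : ℝ → ℝ → ℝ} {R : ℝ}, IsEllipticCoeff a₀ a₁ a →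
      (∀ s, |deriv a s| ≤ A) → IsHeatSolution L a h F → MemEnergy L (polyWeight n 1) h →
      MemEnergy L (polyWeight n 1) (dS 1 h) → MemWL2 L (polyWeight n 1) (dS 1 F) →
      energy L (polyWeight n 1) h ≤ R → wNormSq L (polyWeight n 1) (dS 1 F) ≤ R →
      sliceInner L (dS 1 h) (dS 1 h) 0 ≤ R → sliceInner L (dS 2 h) (dS 2 h) 0 ≤ R →
      energy L (polyWeight n 1) (dS 1 h) ≤ K * R := by
  obtain ⟨K, hK, henergy⟩ := exists_energy_le_of_sliceInt_eq_zero hL ha₀ a₁ n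
  have hw := isWeight_polyWeight n zero_le_one
  refine ⟨K * (2 * A ^ 2 + 2), by positivity,
    fun {a h F R} ha hA hsol hmem hmem' hF hR hFR hbdry hbdry' => ?_⟩
  have hR₀ : 0 ≤ R := (sliceInner_self_nonneg hL.le _ 0).trans hbdry
  have hle : R ≤ (2 * A ^ 2 + 2) * R := le_mul_of_one_le_left hR₀ (by nlinarith [sq_nonneg A])
  have ha' : Continuous (deriv a) := ha.contDiff.continuous_deriv (by simp)
  have hcomm := hmem.dPsi_two.fst_mul hL.le hw ha' hA
  have hcomm_le := wNormSq_fst_mul_le hL.le hw hmem.dPsi_two ha' hA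
  have hadd := wNormSq_add_le hL.le hw hcomm hF
  have hdPsi := mul_le_mul_of_nonneg_left ((wNormSq_dPsi_two_le_energy hL.le hw h).trans hR)
    (sq_nonneg A)
  rw [mul_assoc]
  refine henergy ha (hsol.dS_one ha.contDiff)
    (sliceInt_dS_one_eq_zero hsol.smooth hsol.periodic) hmem' (hcomm.add hL.le hw hF)
    (by linarith) (hbdry.trans hle) ?_
  rw [← dS_succ]
  exact hbdry'.trans hle

theorem memWL2_and_wNormSq_dS_one_forcing_le {A : ℝ} {w a : ℝ → ℝ} {h F : ℝ → ℝ → ℝ}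
    (hL : 0 ≤ L) (hw : IsWeight w) (ha : ContDiff ℝ (⊤ : ℕ∞) a) (hA : ∀ s, |deriv a s| ≤ A)
    (hA' : ∀ s, |deriv (deriv a) s| ≤ A) (hsol : IsHeatSolution L a h F)
    (hmem : MemEnergy L w h) (hmem' : MemEnergy L w (dS 1 h)) (hF : MemWL2 L w (dS 2 F)) :
    MemWL2 L w (dS 1 fun s ψ => deriv a s * dPsi 2 h s ψ + dS 1 F s ψ) ∧
      wNormSq L w (dS 1 fun s ψ => deriv a s * dPsi 2 h s ψ + dS 1 F s ψ)
        ≤ 4 * A ^ 2 * (energy L w h + energy L w (dS 1 h)) + 2 * wNormSq L w (dS 2 F) := by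
  have ha' : ContDiff ℝ (⊤ : ℕ∞) (deriv a) := ContDiff.iterate_deriv 1 ha
  have ha'' : Continuous (deriv (deriv a)) := ha'.continuous_deriv (by simp)
  have hformula : dS 1 (fun s ψ => deriv a s * dPsi 2 h s ψ + dS 1 F s ψ)
      = fun s ψ => (deriv (deriv a) s * dPsi 2 h s ψ + deriv a s * dPsi 2 (dS 1 h) s ψ)
        + dS 2 F s ψ := by
    rw [dS_one_add ((Smooth2.of_fst ha').mul hsol.smooth.dPsi_two) (hsol.smooth_right ha).dS_one,
      dS_one_fst_mul ha' hsol.smooth.dPsi_two, hsol.smooth.dS_one_dPsi_two, ← dS_succ]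
  have h₁ := hmem.dPsi_two.fst_mul hL hw ha'' hA'
  have h₂ := hmem'.dPsi_two.fst_mul hL hw ha'.continuous hA
  rw [hformula]
  refine ⟨(h₁.add hL hw h₂).add hL hw hF, ?_⟩
  have hadd := wNormSq_add_le hL hw (h₁.add hL hw h₂) hF
  have hadd' := wNormSq_add_le hL hw h₁ h₂
  have hle₁ := wNormSq_fst_mul_le hL hw hmem.dPsi_two ha'' hA'
  have hle₂ := wNormSq_fst_mul_le hL hw hmem'.dPsi_two ha'.continuous hA
  have hE₁ := mul_le_mul_of_nonneg_left (wNormSq_dPsi_two_le_energy hL hw h) (sq_nonneg A)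
  have hE₂ := mul_le_mul_of_nonneg_left (wNormSq_dPsi_two_le_energy hL hw (dS 1 h)) (sq_nonneg A)
  linarith

theorem exists_energy_dS_two_le (hL : 0 < L) (ha₀ : 0 < a₀) (a₁ A : ℝ) (n : ℕ) :
    ∃ K > 0, ∀ {a : ℝ → ℝ} {h F : ℝ → ℝ → ℝ} {R : ℝ}, IsEllipticCoeff a₀ a₁ a →
      (∀ s, |deriv a s| ≤ A) → (∀ s, |deriv (deriv a) s| ≤ A) → IsHeatSolution L a h F →
      (∀ k ≤ 2, MemEnergy L (polyWeight n 1) (dS k h)) → MemWL2 L (polyWeight n 1) (dS 2 F) →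
      (∀ k ≤ 1, energy L (polyWeight n 1) (dS k h) ≤ R) →
      wNormSq L (polyWeight n 1) (dS 2 F) ≤ R → sliceInner L (dS 2 h) (dS 2 h) 0 ≤ R →
      sliceInner L (dS 3 h) (dS 3 h) 0 ≤ R → energy L (polyWeight n 1) (dS 2 h) ≤ K * R := by
  obtain ⟨K, hK, hlevel⟩ := exists_energy_dS_one_le hL ha₀ a₁ A n
  have hw := isWeight_polyWeight n zero_le_one
  refine ⟨K * (8 * A ^ 2 + 2), by positivity,
    fun {a h F R} ha hA hA' hsol hmem hF hE hFR hbdry hbdry' => ?_⟩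
  have hR : 0 ≤ R := (sliceInner_self_nonneg hL.le _ 0).trans hbdry
  have hle : R ≤ (8 * A ^ 2 + 2) * R := le_mul_of_one_le_left hR (by nlinarith [sq_nonneg A])
  have htwo : dS 2 h = dS 1 (dS 1 h) := dS_succ 1 h
  have hthree : dS 3 h = dS 2 (dS 1 h) := by rw [dS_succ 2, htwo, dS_succ 1 (dS 1 h)]
  have hmem₀ : MemEnergy L (polyWeight n 1) h := dS_zero h ▸ hmem 0 (by simp)
  have hE₀ : energy L (polyWeight n 1) h ≤ R := dS_zero h ▸ hE 0 (by simp)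
  have hE₁ := hE 1 le_rfl
  obtain ⟨hforce, hforce_le⟩ := memWL2_and_wNormSq_dS_one_forcing_le hL.le hw ha.contDiff hA hA'
    hsol hmem₀ (hmem 1 (by simp)) hF
  have hEsum := mul_le_mul_of_nonneg_left (add_le_add hE₀ hE₁) (by positivity : 0 ≤ 4 * A ^ 2)
  rw [htwo, mul_assoc]
  exact hlevel ha hA (hsol.dS_one ha.contDiff) (hmem 1 (by simp)) (htwo ▸ hmem 2 le_rfl) hforce
    (hE₁.trans hle) (by linarith) (htwo ▸ hbdry.trans hle) (hthree ▸ hbdry'.trans hle)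

theorem exists_energy_dS_le (hL : 0 < L) (ha₀ : 0 < a₀) (a₁ A : ℝ) {m : ℕ} (hm : m ≠ 0) :
    ∃ K > 0, ∀ {a : ℝ → ℝ} {h F : ℝ → ℝ → ℝ} {κ R : ℝ}, IsEllipticCoeff a₀ a₁ a →
      (∀ s, |deriv a s| ≤ A) → (∀ s, |deriv (deriv a) s| ≤ A) → IsHeatSolution L a h F →
      (∀ k ≤ 2, MemEnergy L (polyWeight (2 * m) 1) (dS k h)) →
      (∀ k ≤ 2, MemWL2 L (polyWeight (2 * m) 1) (dS k F)) →
      (∀ k ≤ 2, wNormSq L (polyWeight (2 * m) 1) (dS k F) ≤ R) → 0 ≤ κ → κ ^ 2 ≤ R →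
      (∀ ψ > 0, |sliceInt L F ψ| ≤ κ / (1 + ψ) ^ (m + 3)) →
      (∀ k ≤ 3, sliceInner L (dS k h) (dS k h) 0 ≤ R) →
      ∀ k ≤ 2, energy L (polyWeight (2 * m) 1) (dS k h) ≤ K * R := by
  obtain ⟨K₀, hK₀, hlevel₀⟩ := exists_energy_le_of_abs_sliceInt_le hL ha₀ a₁ hm
  obtain ⟨K₁, hK₁, hlevel₁⟩ := exists_energy_dS_one_le hL ha₀ a₁ A (2 * m)
  obtain ⟨K₂, hK₂, hlevel₂⟩ := exists_energy_dS_two_le hL ha₀ a₁ A (2 * m)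
  refine ⟨(1 + K₂) * ((1 + K₁) * (1 + K₀)), by positivity,
    fun {a h F κ R} ha hA hA' hsol hmem hF hFR hκ hκR hdecay hbdry => ?_⟩
  have hR : 0 ≤ R := (sq_nonneg κ).trans hκR
  have hmem₀ : MemEnergy L (polyWeight (2 * m) 1) h := dS_zero h ▸ hmem 0 (by simp)
  have hE₀ : energy L (polyWeight (2 * m) 1) h ≤ K₀ * R :=
    hlevel₀ ha hsol hmem₀ (dS_zero F ▸ hF 0 (by simp)) (dS_zero F ▸ hFR 0 (by simp)) hκ hκR hdecay
      (dS_zero h ▸ hbdry 0 (by simp)) (hbdry 1 (by simp))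
  have hK₀R : 0 ≤ K₀ * R := by positivity
  have hRc₁ : R ≤ (1 + K₀) * R := by linarith
  have hE₁ : energy L (polyWeight (2 * m) 1) (dS 1 h) ≤ K₁ * ((1 + K₀) * R) :=
    hlevel₁ ha hA hsol hmem₀ (hmem 1 (by simp)) (hF 1 (by simp)) (by linarith)
      ((hFR 1 (by simp)).trans hRc₁) ((hbdry 1 (by simp)).trans hRc₁)
      ((hbdry 2 (by simp)).trans hRc₁)
  have hK₁R : 0 ≤ K₁ * ((1 + K₀) * R) := by positivity
  have hRc₂ : R ≤ (1 + K₁) * (1 + K₀) * R := by linarith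
  have hE_le_one : ∀ k ≤ 1, energy L (polyWeight (2 * m) 1) (dS k h) ≤ (1 + K₁) * (1 + K₀) * R := by
    intro k hk
    interval_cases k
    · rw [dS_zero]; linarith
    · linarith
  have hE₂ : energy L (polyWeight (2 * m) 1) (dS 2 h) ≤ K₂ * ((1 + K₁) * (1 + K₀) * R) :=
    hlevel₂ ha hA hA' hsol hmem (hF 2 le_rfl) hE_le_one ((hFR 2 le_rfl).trans hRc₂)
      ((hbdry 2 (by simp)).trans hRc₂) ((hbdry 3 le_rfl).trans hRc₂)
  have hK₂R : 0 ≤ K₂ * ((1 + K₁) * (1 + K₀) * R) := by positivity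
  intro k hk
  rcases hk.lt_or_eq with hk | rfl
  · linarith [hE_le_one k (by lia)]
  · linarith

end LinearEstimate

/-! ### The Prandtl nonlinearity -/

/-- The factor multiplying `∂_s Q` in the nonlinearity, as a function of `u = Q / (ω q_e)²`. -/
noncomputable def sqrtDefect (u : ℝ) : ℝ := 1 - 1 / √(1 + u)

section SqrtDefect

variable {u : ℝ}

theorem one_half_le_sqrt_one_add (hu : |u| ≤ 1 / 2) : 1 / 2 ≤ √(1 + u) :=
  Real.le_sqrt_of_sq_le (by linarith [(abs_le.1 hu).1])

theorem abs_one_sub_sqrtDefect_le (hu : |u| ≤ 1 / 2) : |1 - sqrtDefect u| ≤ 2 := by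
  have hpos : 0 < √(1 + u) := one_half_pos.trans_le (one_half_le_sqrt_one_add hu)
  rw [sqrtDefect, sub_sub_cancel, abs_of_pos (by positivity), div_le_iff₀ hpos]
  linarith [one_half_le_sqrt_one_add hu]

theorem abs_sqrtDefect_le (hu : |u| ≤ 1 / 2) : |sqrtDefect u| ≤ 2 * |u| := by
  have hle := one_half_le_sqrt_one_add hu
  have hpos : 0 < √(1 + u) * (√(1 + u) + 1) := by positivity
  have hsq : √(1 + u) ^ 2 = 1 + u := Real.sq_sqrt (by linarith [(abs_le.1 hu).1])
  have hrationalize : sqrtDefect u = u / (√(1 + u) * (√(1 + u) + 1)) := by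
    have : 0 < √(1 + u) := one_half_pos.trans_le hle
    rw [sqrtDefect]
    field_simp
    linear_combination hsq
  rw [hrationalize, abs_div, abs_of_pos hpos, div_le_iff₀ hpos, mul_right_comm]
  exact le_mul_of_one_le_left (abs_nonneg u) (by nlinarith)

theorem hasDerivAt_sqrtDefect (hu : |u| ≤ 1 / 2) :
    HasDerivAt sqrtDefect (1 / 2 * (1 - sqrtDefect u) ^ 3) u := by
  have hpos : 0 < √(1 + u) := one_half_pos.trans_le (one_half_le_sqrt_one_add hu)
  have hne : 1 + u ≠ 0 := (Real.sqrt_pos.1 hpos).ne'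
  have hderiv : HasDerivAt sqrtDefect
      (-((0 * √(1 + u) - 1 * (1 / (2 * √(1 + u)))) / √(1 + u) ^ 2)) u :=
    ((hasDerivAt_const u 1).fun_div (((hasDerivAt_id u).const_add 1).sqrt hne) hpos.ne').const_sub 1
  refine hderiv.congr_deriv ?_
  rw [sqrtDefect]
  field_simp
  ring

end SqrtDefect

section SqrtDefectComp

variable {u : ℝ → ℝ} (hu : ContDiff ℝ (⊤ : ℕ∞) u) (hu_le : ∀ s, |u s| ≤ 1 / 2)
include hu hu_le

theorem contDiff_sqrtDefect_comp : ContDiff ℝ (⊤ : ℕ∞) fun s => sqrtDefect (u s) := by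
  have hpos s : 0 < √(1 + u s) := one_half_pos.trans_le (one_half_le_sqrt_one_add (hu_le s))
  exact contDiff_const.sub (contDiff_const.div
    ((contDiff_const.add hu).sqrt fun s => (Real.sqrt_pos.1 (hpos s)).ne') fun s => (hpos s).ne')

theorem deriv_sqrtDefect_comp :
    deriv (fun s => sqrtDefect (u s)) = fun s => 1 / 2 * (1 - sqrtDefect (u s)) ^ 3 * deriv u s :=
  funext fun s => ((hasDerivAt_sqrtDefect (hu_le s)).comp s
    (hu.differentiable (by simp) s).hasDerivAt).deriv

theorem deriv_deriv_sqrtDefect_comp (s : ℝ) :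
    deriv (deriv fun s => sqrtDefect (u s)) s
      = 1 / 2 * (1 - sqrtDefect (u s)) ^ 3 * deriv (deriv u) s
        - 3 / 4 * (1 - sqrtDefect (u s)) ^ 5 * deriv u s ^ 2 := by
  have hu' : ContDiff ℝ (⊤ : ℕ∞) (deriv u) := ContDiff.iterate_deriv 1 hu
  have hΦ := ((contDiff_sqrtDefect_comp hu hu_le).differentiable (by simp) s).hasDerivAt
  rw [deriv_sqrtDefect_comp hu hu_le] at hΦ ⊢
  rw [((((hΦ.const_sub 1).fun_pow 3).const_mul (1 / 2)).fun_mul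
    (hu'.differentiable (by simp) s).hasDerivAt).deriv]
  norm_num
  ring

theorem abs_deriv_sqrtDefect_comp_le (s : ℝ) :
    |deriv (fun s => sqrtDefect (u s)) s| ≤ 4 * |deriv u s| := by
  have hle := pow_le_pow_left₀ (abs_nonneg _) (abs_one_sub_sqrtDefect_le (hu_le s)) 3
  simp only [deriv_sqrtDefect_comp hu hu_le, abs_mul, abs_pow,
    abs_of_pos (one_half_pos (α := ℝ))]
  gcongr
  linarith

theorem abs_deriv_deriv_sqrtDefect_comp_le (s : ℝ) :
    |deriv (deriv fun s => sqrtDefect (u s)) s|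
      ≤ 4 * |deriv (deriv u) s| + 24 * deriv u s ^ 2 := by
  have hle := abs_one_sub_sqrtDefect_le (hu_le s)
  have h₃ := pow_le_pow_left₀ (abs_nonneg _) hle 3
  have h₅ := pow_le_pow_left₀ (abs_nonneg _) hle 5
  rw [deriv_deriv_sqrtDefect_comp hu hu_le]
  refine (abs_sub _ _).trans (add_le_add ?_ ?_)
  · rw [abs_mul, abs_mul, abs_pow, abs_of_pos one_half_pos]
    gcongr
    linarith
  · rw [abs_mul, abs_mul, abs_pow, abs_of_pos (by norm_num : (0 : ℝ) < 3 / 4), abs_sq]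
    gcongr
    linarith

end SqrtDefectComp

theorem abs_mul_le_mul {x y X Y : ℝ} (hx : |x| ≤ X) (hy : |y| ≤ Y) : |x * y| ≤ X * Y :=
  (abs_mul x y).trans_le (mul_le_mul hx hy (abs_nonneg y) ((abs_nonneg x).trans hx))

theorem iteratedDeriv_two_mul {f g : ℝ → ℝ} (hf : ContDiff ℝ (⊤ : ℕ∞) f)
    (hg : ContDiff ℝ (⊤ : ℕ∞) g) (s : ℝ) :
    iteratedDeriv 2 (fun s => f s * g s) s = f s * iteratedDeriv 2 g s
      + 2 * (deriv f s * deriv g s) + iteratedDeriv 2 f s * g s := by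
  change iteratedDeriv 2 (f * g) s = _
  rw [iteratedDeriv_mul (contDiff_infty.1 hf 2).contDiffAt (contDiff_infty.1 hg 2).contDiffAt]
  simp only [Finset.sum_range_succ, Finset.sum_range_zero, iteratedDeriv_zero, iteratedDeriv_one,
    Nat.choose_zero_right, Nat.choose_one_right, Nat.choose_self, Nat.cast_one, Nat.cast_ofNat,
    Nat.sub_zero, Nat.sub_self, Nat.reduceSub]
  ring

section SliceForcing

variable {r p : ℝ → ℝ} {R D : ℝ} (hr : ContDiff ℝ (⊤ : ℕ∞) r) (hp : ContDiff ℝ (⊤ : ℕ∞) p)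
  (hr_le : ∀ k ≤ 2, ∀ s, |iteratedDeriv k r s| ≤ R)
  (hp_le : ∀ k ≤ 1, ∀ s, |iteratedDeriv k p s| ≤ D)
include hr_le hp_le

theorem abs_mul_apply_le (s : ℝ) : |r s * p s| ≤ R * D :=
  abs_mul_le_mul (hr_le 0 (by simp) s) (hp_le 0 (by simp) s)

include hr hp

theorem abs_deriv_mul_le (s : ℝ) : |deriv (fun s => r s * p s) s| ≤ 2 * (R * D) := by
  rw [deriv_fun_mul (hr.differentiable (by simp) s) (hp.differentiable (by simp) s),
    ← iteratedDeriv_one, ← iteratedDeriv_one]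
  have h₁ := abs_mul_le_mul (hr_le 1 (by simp) s) (hp_le 0 (by simp) s)
  have h₂ := abs_mul_le_mul (hr_le 0 (by simp) s) (hp_le 1 le_rfl s)
  rw [iteratedDeriv_zero] at h₁ h₂
  linarith [abs_add_le (iteratedDeriv 1 r s * p s) (r s * iteratedDeriv 1 p s)]

theorem abs_iteratedDeriv_two_mul_le (s : ℝ) :
    |iteratedDeriv 2 (fun s => r s * p s) s| ≤ 3 * (R * D) + R * |iteratedDeriv 2 p s| := by
  rw [iteratedDeriv_two_mul hr hp, ← iteratedDeriv_one, ← iteratedDeriv_one]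
  have h₀ := abs_mul_le_mul (hr_le 0 (by simp) s) (le_refl |iteratedDeriv 2 p s|)
  have h₁ := abs_mul_le_mul (hr_le 1 (by simp) s) (hp_le 1 le_rfl s)
  have h₂ := abs_mul_le_mul (hr_le 2 le_rfl s) (hp_le 0 (by simp) s)
  rw [iteratedDeriv_zero] at h₀ h₂
  rw [abs_le] at h₀ h₁ h₂ ⊢
  constructor <;> linarith

theorem abs_sqrtDefect_mul_le (hRD : R * D ≤ 1 / 2) (s : ℝ) :
    |sqrtDefect (r s * p s)| ≤ 2 * (R * D)
      ∧ |deriv (fun s => sqrtDefect (r s * p s)) s| ≤ 8 * (R * D)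
      ∧ |iteratedDeriv 2 (fun s => sqrtDefect (r s * p s)) s|
        ≤ 60 * (R * D) + 4 * R * |iteratedDeriv 2 p s| := by
  have hu : ContDiff ℝ (⊤ : ℕ∞) fun s => r s * p s := hr.mul hp
  have h₀ := abs_mul_apply_le hr_le hp_le
  have hhalf : ∀ s, |r s * p s| ≤ 1 / 2 := fun s => (h₀ s).trans hRD
  have h₁ := abs_deriv_mul_le hr hp hr_le hp_le s
  have h₂ := abs_iteratedDeriv_two_mul_le hr hp hr_le hp_le s
  have hsq := pow_le_pow_left₀ (abs_nonneg _) h₁ 2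
  have hRD_sq : (2 * (R * D)) ^ 2 ≤ 2 * (R * D) := by
    nlinarith [(abs_nonneg _).trans (h₀ s)]
  rw [sq_abs] at hsq
  refine ⟨(abs_sqrtDefect_le (hhalf s)).trans (by linarith [h₀ s]),
    (abs_deriv_sqrtDefect_comp_le hu hhalf s).trans (by linarith), ?_⟩
  have hΦ := abs_deriv_deriv_sqrtDefect_comp_le hu hhalf s
  simp only [iteratedDeriv_succ, iteratedDeriv_zero] at h₂ hΦ ⊢
  linarith

theorem abs_iteratedDeriv_sqrtDefect_mul_deriv_le (hRD : R * D ≤ 1 / 2) {j : ℕ} (hj : j ≤ 2)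
    (s : ℝ) : |iteratedDeriv j (fun s => sqrtDefect (r s * p s) * deriv p s) s|
      ≤ 60 * (R * D)
        * (|iteratedDeriv 1 p s| + |iteratedDeriv 2 p s| + |iteratedDeriv 3 p s|) := by
  have hΦ := contDiff_sqrtDefect_comp (hr.mul hp) fun s =>
    (abs_mul_apply_le hr_le hp_le s).trans hRD
  have hp' : ContDiff ℝ (⊤ : ℕ∞) (deriv p) := ContDiff.iterate_deriv 1 hp
  obtain ⟨h₀, h₁, h₂⟩ := abs_sqrtDefect_mul_le hr hp hr_le hp_le hRD s
  have hRD₀ : 0 ≤ R * D := (abs_nonneg _).trans (abs_mul_apply_le hr_le hp_le s)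
  have hR₀ : 0 ≤ R := (abs_nonneg _).trans (hr_le 0 (by simp) s)
  have hD := hp_le 1 le_rfl s
  have hquad := mul_le_mul_of_nonneg_left hD (by positivity : 0 ≤ R * |iteratedDeriv 2 p s|)
  have n₁ : 0 ≤ R * D * |iteratedDeriv 1 p s| := by positivity
  have n₂ : 0 ≤ R * D * |iteratedDeriv 2 p s| := by positivity
  have n₃ : 0 ≤ R * D * |iteratedDeriv 3 p s| := by positivity
  have e₂ : deriv (deriv p) s = iteratedDeriv 2 p s := by
    simp only [iteratedDeriv_succ, iteratedDeriv_zero]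
  have e₃ : iteratedDeriv 2 (deriv p) s = iteratedDeriv 3 p s :=
    congrFun (iteratedDeriv_succ' (n := 2)).symm s
  have b₀ := abs_mul_le_mul h₀ (le_refl |iteratedDeriv 1 p s|)
  have b₁ := abs_mul_le_mul h₀ (le_refl |iteratedDeriv 2 p s|)
  have b₂ := abs_mul_le_mul h₁ (le_refl |iteratedDeriv 1 p s|)
  have b₃ := abs_mul_le_mul h₀ (le_refl |iteratedDeriv 3 p s|)
  have b₄ := abs_mul_le_mul h₁ (le_refl |iteratedDeriv 2 p s|)
  have b₅ := abs_mul_le_mul h₂ (le_refl |iteratedDeriv 1 p s|)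
  interval_cases j
  · rw [iteratedDeriv_zero, ← iteratedDeriv_one]
    linarith
  · rw [iteratedDeriv_one, deriv_fun_mul (hΦ.differentiable (by simp) s)
      (hp'.differentiable (by simp) s), e₂, ← iteratedDeriv_one (f := p)]
    rw [abs_le] at b₁ b₂ ⊢
    constructor <;> linarith
  · rw [iteratedDeriv_two_mul hΦ hp', e₂, e₃, ← iteratedDeriv_one (f := p)]
    rw [abs_le] at b₃ b₄ b₅ ⊢
    constructor <;> linarith

end SliceForcing

/-! ### Weighted estimates of the forcing -/

theorem energy_nonneg {L : ℝ} {w : ℝ → ℝ} (hL : 0 ≤ L) (hw : IsWeight w) (h : ℝ → ℝ → ℝ) :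
    0 ≤ energy L w h :=
  add_nonneg (add_nonneg (add_nonneg (wNormSq_nonneg hL hw _) (wNormSq_nonneg hL hw _))
    (wNormSq_nonneg hL hw _)) (wNormSq_nonneg hL hw _)

theorem wNormSq_dS_one_le_energy {L : ℝ} {w : ℝ → ℝ} (hL : 0 ≤ L) (hw : IsWeight w)
    (h : ℝ → ℝ → ℝ) : wNormSq L w (dS 1 h) ≤ energy L w h := by
  have h₁ := wNormSq_nonneg hL hw h
  have h₂ := wNormSq_nonneg hL hw (dPsi 1 h)
  have h₃ := wNormSq_nonneg hL hw (dPsi 2 h)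
  rw [energy]
  linarith

theorem wNormSq_abs_add_abs_add_abs_le {L c e : ℝ} {w : ℝ → ℝ} {u v₁ v₂ v₃ : ℝ → ℝ → ℝ}
    (hL : 0 ≤ L) (hw : IsWeight w) (hu : Continuous (uncurry u)) (h₁ : MemWL2 L w v₁)
    (h₂ : MemWL2 L w v₂) (h₃ : MemWL2 L w v₃)
    (h : ∀ s, ∀ ψ > 0, |u s ψ| ≤ c * (|v₁ s ψ| + |v₂ s ψ| + |v₃ s ψ|))
    (he₁ : wNormSq L w v₁ ≤ e) (he₂ : wNormSq L w v₂ ≤ e) (he₃ : wNormSq L w v₃ ≤ e) :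
    MemWL2 L w u ∧ wNormSq L w u ≤ 10 * c ^ 2 * e := by
  have habs : ∀ v, wNormSq L w (fun s ψ => |v s ψ|) = wNormSq L w v := fun v => by
    simp only [wNormSq, wInner, sliceInner, abs_mul_abs_self]
  have hsum₁₂ := (h₁.abs hL hw).add hL hw (h₂.abs hL hw)
  have hsum := hsum₁₂.add hL hw (h₃.abs hL hw)
  have hle : ∀ s, ∀ ψ > 0, |u s ψ| ≤ c * |(|v₁ s ψ| + |v₂ s ψ| + |v₃ s ψ|)| := fun s ψ hψ => by
    rw [abs_of_nonneg (by positivity : 0 ≤ |v₁ s ψ| + |v₂ s ψ| + |v₃ s ψ|)]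
    exact h s ψ hψ
  have hadd₁₂ := wNormSq_add_le hL hw (h₁.abs hL hw) (h₂.abs hL hw)
  have hadd := wNormSq_add_le hL hw hsum₁₂ (h₃.abs hL hw)
  simp only [habs] at hadd₁₂ hadd
  refine ⟨hsum.of_abs_le hL hw hu hle, (wNormSq_le_of_abs_le hL hw hsum hu hle).trans ?_⟩
  rw [mul_comm 10, mul_assoc]
  gcongr
  linarith

/-- The constant in the pointwise decay of a function whose energies with weight `(1 + ψ)ⁿ` are
finite: it combines the Sobolev inequality on slices with the trace inequality in `ψ`. -/
noncomputable def decayConst (L : ℝ) (n : ℕ) : ℝ := (2 * L + 2 / L) * (n + 1)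

section Forcing

variable {L e : ℝ} {m : ℕ} (hL : 0 < L)
include hL

theorem decayConst_pos (n : ℕ) : 0 < decayConst L n := by
  unfold decayConst
  positivity

theorem polyWeight_mul_sliceInner_le_energy {n : ℕ} {v : ℝ → ℝ → ℝ} (hv : Smooth2 v)
    (hmem : MemEnergy L (polyWeight n 1) v) {ψ : ℝ} (hψ : 0 ≤ ψ) :
    (1 + ψ) ^ n * sliceInner L v v ψ ≤ (n + 1) * energy L (polyWeight n 1) v := by
  have hw := isWeight_polyWeight n zero_le_one
  have htrace := polyWeight_mul_sliceInner_le hL.le hv hmem.self hmem.dPsi_one hψ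
  have h₁ := wNormSq_nonneg hL.le hw (dS 1 v)
  have h₂ := wNormSq_nonneg hL.le hw (dPsi 2 v)
  have h₃ : 0 ≤ n * wNormSq L (polyWeight n 1) (dS 1 v) := by positivity
  have h₄ : 0 ≤ n * wNormSq L (polyWeight n 1) (dPsi 2 v) := by positivity
  have h₅ := mul_nonneg n.cast_nonneg (wNormSq_nonneg hL.le hw (dPsi 1 v))
  rw [energy]
  linarith

theorem abs_apply_le_of_energy_le {v : ℝ → ℝ → ℝ} (hv : Smooth2 v) (hper : PeriodicS L v)
    (hmem : MemEnergy L (polyWeight (2 * m) 1) v)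
    (hmem' : MemEnergy L (polyWeight (2 * m) 1) (dS 1 v))
    (he : energy L (polyWeight (2 * m) 1) v ≤ e)
    (he' : energy L (polyWeight (2 * m) 1) (dS 1 v) ≤ e) (s : ℝ) {ψ : ℝ} (hψ : 0 ≤ ψ) :
    |v s ψ| ≤ √(decayConst L (2 * m) * e) / (1 + ψ) ^ m := by
  have hslice := (polyWeight_mul_sliceInner_le_energy hL hv hmem hψ).trans
    (mul_le_mul_of_nonneg_left he (by positivity))
  have hslice' := (polyWeight_mul_sliceInner_le_energy hL hv.dS_one hmem' hψ).trans
    (mul_le_mul_of_nonneg_left he' (by positivity))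
  rw [le_div_iff₀' (by positivity)]
  refine Real.le_sqrt_of_sq_le ?_
  calc ((1 + ψ) ^ m * |v s ψ|) ^ 2 = (1 + ψ) ^ (2 * m) * v s ψ ^ 2 := by
        rw [mul_pow, sq_abs]; ring
    _ ≤ (1 + ψ) ^ (2 * m) * (2 * L * sliceInner L (dS 1 v) (dS 1 v) ψ
        + 2 / L * sliceInner L v v ψ) := by
      gcongr; exact sq_apply_le_of_periodicS hL hv hper s ψ
    _ = 2 * L * ((1 + ψ) ^ (2 * m) * sliceInner L (dS 1 v) (dS 1 v) ψ)
        + 2 / L * ((1 + ψ) ^ (2 * m) * sliceInner L v v ψ) := by ring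
    _ ≤ 2 * L * ((↑(2 * m) + 1) * e) + 2 / L * ((↑(2 * m) + 1) * e) := by
      gcongr 2 * L * ?_ + 2 / L * ?_
    _ = decayConst L (2 * m) * e := by rw [decayConst]; ring

variable {P F : ℝ → ℝ → ℝ} {r : ℝ → ℝ} {R : ℝ} (hP : Smooth2 P) (hPper : PeriodicS L P)
  (hmem : ∀ k ≤ 2, MemEnergy L (polyWeight (2 * m) 1) (dS k P))
  (he : ∀ k ≤ 2, energy L (polyWeight (2 * m) 1) (dS k P) ≤ e)
include hP hPper hmem he

theorem abs_dS_apply_le {k : ℕ} (hk : k ≤ 1) (s : ℝ) {ψ : ℝ} (hψ : 0 ≤ ψ) :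
    |dS k P s ψ| ≤ √(decayConst L (2 * m) * e) / (1 + ψ) ^ m :=
  abs_apply_le_of_energy_le hL (hP.dS k) (hPper.dS k) (hmem k (by lia))
    (dS_succ k P ▸ hmem (k + 1) (by lia)) (he k (by lia)) (dS_succ k P ▸ he (k + 1) (by lia)) s hψ

variable (hr : ContDiff ℝ (⊤ : ℕ∞) r) (hr_le : ∀ k ≤ 2, ∀ s, |iteratedDeriv k r s| ≤ R)
  (hsmall : R * √(decayConst L (2 * m) * e) ≤ 1 / 2)
  (hF : ∀ s, ∀ ψ > 0, F s ψ = sqrtDefect (r s * P s ψ) * dS 1 P s ψ)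
include hr_le hsmall hF

theorem abs_forcing_le (s : ℝ) {ψ : ℝ} (hψ : 0 < ψ) :
    |F s ψ| ≤ 2 * R * decayConst L (2 * m) * e / (1 + ψ) ^ (2 * m) := by
  have hP₀ := abs_dS_apply_le hL hP hPper hmem he (Nat.zero_le 1) s hψ.le
  have hP₁ := abs_dS_apply_le hL hP hPper hmem he le_rfl s hψ.le
  have hr₀ := hr_le 0 (by simp) s
  rw [dS_zero] at hP₀
  rw [iteratedDeriv_zero] at hr₀
  have hR : 0 ≤ R := (abs_nonneg _).trans hr₀
  have he₀ : 0 ≤ e := (energy_nonneg hL.le (isWeight_polyWeight _ zero_le_one) _).trans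
    (he 0 (by simp))
  have hC := decayConst_pos hL (2 * m)
  have hu := abs_mul_le_mul hr₀ hP₀
  have hu_half : |r s * P s ψ| ≤ 1 / 2 := hu.trans <| le_trans (by
    gcongr; exact div_le_self (Real.sqrt_nonneg _) (one_le_pow₀ (by linarith))) hsmall
  rw [hF s ψ hψ]
  calc |sqrtDefect (r s * P s ψ) * dS 1 P s ψ|
      ≤ 2 * (R * (√(decayConst L (2 * m) * e) / (1 + ψ) ^ m))
        * (√(decayConst L (2 * m) * e) / (1 + ψ) ^ m) :=
      abs_mul_le_mul ((abs_sqrtDefect_le hu_half).trans (by gcongr)) hP₁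
    _ = 2 * R * √(decayConst L (2 * m) * e) ^ 2 / (1 + ψ) ^ (2 * m) := by ring
    _ = 2 * R * decayConst L (2 * m) * e / (1 + ψ) ^ (2 * m) := by
      rw [Real.sq_sqrt (by positivity)]; ring

include hr

theorem abs_dS_forcing_le {k : ℕ} (hk : k ≤ 2) (s : ℝ) {ψ : ℝ} (hψ : 0 < ψ) :
    |dS k F s ψ| ≤ 60 * (R * √(decayConst L (2 * m) * e))
      * (|dS 1 P s ψ| + |dS 2 P s ψ| + |dS 3 P s ψ|) := by
  have hslice : (fun s' => F s' ψ)
      = fun s' => sqrtDefect (r s' * P s' ψ) * deriv (fun s' => P s' ψ) s' :=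
    funext fun s' => by rw [hF s' ψ hψ, dS_one_apply]
  have hdecay : ∀ j ≤ 1, ∀ s',
      |iteratedDeriv j (fun s' => P s' ψ) s'| ≤ √(decayConst L (2 * m) * e) := fun j hj s' =>
    (abs_dS_apply_le hL hP hPper hmem he hj s' hψ.le).trans
      (div_le_self (Real.sqrt_nonneg _) (one_le_pow₀ (by linarith)))
  have hbound := abs_iteratedDeriv_sqrtDefect_mul_deriv_le hr (hP.contDiff_slice ψ) hr_le hdecay
    hsmall hk s
  rwa [← hslice] at hbound

theorem memWL2_and_wNormSq_dS_forcing_le (hFs : Smooth2 F) {k : ℕ} (hk : k ≤ 2) :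
    MemWL2 L (polyWeight (2 * m) 1) (dS k F) ∧ wNormSq L (polyWeight (2 * m) 1) (dS k F)
      ≤ 36000 * R ^ 2 * decayConst L (2 * m) * e ^ 2 := by
  have hw := isWeight_polyWeight (2 * m) zero_le_one
  have he₀ : 0 ≤ e := (energy_nonneg hL.le hw _).trans (he 0 (by simp))
  have hC := decayConst_pos hL (2 * m)
  have hP_mem : ∀ j ≤ 2, MemWL2 L (polyWeight (2 * m) 1) (dS (j + 1) P) := fun j hj =>
    dS_succ j P ▸ (hmem j hj).dS_one
  have hP_le : ∀ j ≤ 2, wNormSq L (polyWeight (2 * m) 1) (dS (j + 1) P) ≤ e := fun j hj =>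
    dS_succ j P ▸ (wNormSq_dS_one_le_energy hL.le hw _).trans (he j hj)
  obtain ⟨hF_mem, hF_le⟩ := wNormSq_abs_add_abs_add_abs_le hL.le hw
    (hFs.dS k).continuous_uncurry (hP_mem 0 (by simp)) (hP_mem 1 (by simp)) (hP_mem 2 le_rfl)
    (fun s ψ hψ => abs_dS_forcing_le hL hP hPper hmem he hr hr_le hsmall hF hk s hψ)
    (hP_le 0 (by simp)) (hP_le 1 (by simp)) (hP_le 2 le_rfl)
  refine ⟨hF_mem, hF_le.trans_eq ?_⟩
  rw [mul_pow, mul_pow, Real.sq_sqrt (by positivity)]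
  ring

omit hr

theorem abs_sliceInt_forcing_le {ψ : ℝ} (hψ : 0 < ψ) :
    |sliceInt L F ψ| ≤ 2 * L * R * decayConst L (2 * m) * e / (1 + ψ) ^ (2 * m) := by
  have hbound := intervalIntegral.norm_integral_le_of_norm_le_const (a := 0) (b := L)
    (f := fun s => F s ψ)
    fun s _ => abs_forcing_le hL hP hPper hmem he hr_le hsmall hF s hψ
  rw [sub_zero, abs_of_pos hL] at hbound
  exact hbound.trans_eq (by ring)

end Forcing

/-! ### The `X` norm as a sum of energies -/

section XNorm

variable {L : ℝ} {k m k' m' : ℕ} {h u : ℝ → ℝ → ℝ}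

theorem integral_Ioc_wt_sq (hL : 0 ≤ L) (m : ℕ) (u : ℝ → ℝ → ℝ) (ψ : ℝ) :
    ∫ s in Ioc 0 L, wt m u s ψ ^ 2 = polyWeight (2 * m) 1 ψ * sliceInner L u u ψ := by
  rw [sliceInner, sliceInt, intervalIntegral.integral_of_le hL, ← integral_const_mul]
  congr with s
  rw [wt, polyWeight, one_mul, pow_mul']
  ring

theorem FiniteL2.memWL2 (hL : 0 ≤ L) (hu : Continuous (uncurry u)) (hfin : FiniteL2 L (wt m u)) :
    MemWL2 L (polyWeight (2 * m) 1) u := by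
  rw [FiniteL2, IntegrableOn, Measure.volume_eq_prod, ← Measure.prod_restrict] at hfin
  refine ⟨hu, hfin.integral_prod_right.congr (.of_forall fun ψ => ?_)⟩
  exact integral_Ioc_wt_sq hL m u ψ

theorem FiniteL2.L2sq_eq_wNormSq (hL : 0 ≤ L) (hfin : FiniteL2 L (wt m u)) :
    L2sq L (wt m u) = wNormSq L (polyWeight (2 * m) 1) u := by
  rw [FiniteL2, IntegrableOn, Measure.volume_eq_prod, ← Measure.prod_restrict] at hfin
  rw [L2sq, Measure.volume_eq_prod, ← Measure.prod_restrict, integral_prod_symm _ hfin]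
  simp only [integral_Ioc_wt_sq hL]
  rfl

theorem XnormSq_nonneg (L : ℝ) (k m : ℕ) (h : ℝ → ℝ → ℝ) : 0 ≤ XnormSq L k m h := by
  have hL2sq : ∀ v, 0 ≤ L2sq L v := fun v => integral_nonneg fun _ => sq_nonneg _
  exact Finset.sum_nonneg fun _ _ => Finset.sum_nonneg fun _ _ =>
    add_nonneg (add_nonneg (add_nonneg (hL2sq _) (hL2sq _)) (hL2sq _)) (hL2sq _)

namespace XFinite

theorem memEnergy (hL : 0 ≤ L) (hh : Smooth2 h) (hfin : XFinite L k m h) (hk : k' ≤ k)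
    (hm : m' ≤ m) : MemEnergy L (polyWeight (2 * m') 1) (dS k' h) := by
  obtain ⟨hself, hs, hψ, hψψ⟩ := hfin k' hk m' hm
  have hsmooth := hh.dS k'
  exact ⟨hself.memWL2 hL hsmooth.continuous_uncurry,
    (dS_succ k' h ▸ hs).memWL2 hL hsmooth.dS_one.continuous_uncurry,
    hψ.memWL2 hL hsmooth.dPsi_one.continuous_uncurry,
    hψψ.memWL2 hL hsmooth.dPsi_two.continuous_uncurry⟩

theorem XnormSq_eq_sum_energy (hL : 0 ≤ L) (hfin : XFinite L k m h) :
    XnormSq L k m h = ∑ k' ∈ Finset.range (k + 1), ∑ m' ∈ Finset.range (m + 1),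
      energy L (polyWeight (2 * m') 1) (dS k' h) := by
  refine Finset.sum_congr rfl fun k' hk => Finset.sum_congr rfl fun m' hm => ?_
  obtain ⟨hself, hs, hψ, hψψ⟩ :=
    hfin k' (Finset.mem_range_succ_iff.1 hk) m' (Finset.mem_range_succ_iff.1 hm)
  rw [hself.L2sq_eq_wNormSq hL, hs.L2sq_eq_wNormSq hL, hψ.L2sq_eq_wNormSq hL,
    hψψ.L2sq_eq_wNormSq hL, dS_succ, energy]

theorem energy_le_XnormSq (hL : 0 ≤ L) (hfin : XFinite L k m h) (hk : k' ≤ k) (hm : m' ≤ m) :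
    energy L (polyWeight (2 * m') 1) (dS k' h) ≤ XnormSq L k m h := by
  have hnonneg : ∀ i j, 0 ≤ energy L (polyWeight (2 * j) 1) (dS i h) := fun i j =>
    energy_nonneg hL (isWeight_polyWeight _ zero_le_one) _
  rw [hfin.XnormSq_eq_sum_energy hL]
  exact (Finset.single_le_sum (f := fun j => energy L (polyWeight (2 * j) 1) (dS k' h))
    (fun j _ => hnonneg k' j) (Finset.mem_range_succ_iff.2 hm)).trans
    (Finset.single_le_sum (f := fun i => ∑ j ∈ Finset.range (m + 1),
      energy L (polyWeight (2 * j) 1) (dS i h))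
      (fun i _ => Finset.sum_nonneg fun j _ => hnonneg i j) (Finset.mem_range_succ_iff.2 hk))

theorem XnormSq_le (hL : 0 ≤ L) (hh : Smooth2 h) (hfin : XFinite L k m h) {S : ℝ}
    (hS : ∀ k' ≤ k, energy L (polyWeight (2 * m) 1) (dS k' h) ≤ S) :
    XnormSq L k m h ≤ (k + 1) * (m + 1) * S := by
  have hterm : ∀ k' ∈ Finset.range (k + 1), ∀ m' ∈ Finset.range (m + 1),
      energy L (polyWeight (2 * m') 1) (dS k' h) ≤ S := fun k' hk m' hm => by
    rw [Finset.mem_range_succ_iff] at hk hm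
    have hmono := energy_le_of_weight_le (c := 1) hL (isWeight_polyWeight (2 * m') zero_le_one)
      (hfin.memEnergy hL hh hk le_rfl) fun ψ hψ => by
        rw [one_mul, polyWeight, polyWeight]
        exact pow_le_pow_right₀ (by linarith) (by lia)
    rw [one_mul] at hmono
    exact hmono.trans (hS k' hk)
  rw [hfin.XnormSq_eq_sum_energy hL]
  refine (Finset.sum_le_sum fun k' hk => Finset.sum_le_sum (hterm k' hk)).trans_eq ?_
  simp only [Finset.sum_const, Finset.card_range, nsmul_eq_mul]
  push_cast
  ring

end XFinite

end XNorm

/-! ### Bounds on the data -/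

theorem fNonlin_eq_sqrtDefect_mul {q : ℝ → ℝ} {ω : ℝ} (hω : 0 < ω) {s : ℝ} (hq : 0 < q s)
    (P : ℝ → ℝ → ℝ) (ψ : ℝ) :
    fNonlin q ω P s ψ = sqrtDefect ((ω ^ 2)⁻¹ * (q s ^ 2)⁻¹ * P s ψ) * dS 1 P s ψ := by
  have hfactor : ω ^ 2 * q s ^ 2 + P s ψ
      = (ω * q s) ^ 2 * (1 + (ω ^ 2)⁻¹ * (q s ^ 2)⁻¹ * P s ψ) := by
    field_simp
  rw [fNonlin, sqrtDefect, hfactor, Real.sqrt_mul (sq_nonneg _), Real.sqrt_sq (by positivity),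
    div_mul_cancel_left₀ (mul_pos hω hq).ne', one_div]

section PeriodicData

variable {L : ℝ} {f : ℝ → ℝ}

theorem periodic_iteratedDeriv (hper : Periodic f L) (n : ℕ) : Periodic (iteratedDeriv n f) L := by
  have hshift : (fun s => f (s + L)) = f := funext hper
  intro s
  rw [← congrFun (iteratedDeriv_comp_add_const n f L) s, hshift]

theorem exists_abs_iteratedDeriv_le_of_periodic (hL : L ≠ 0) (hf : ContDiff ℝ (⊤ : ℕ∞) f)
    (hper : Periodic f L) (n : ℕ) : ∃ M > 0, ∀ j ≤ n, ∀ s, |iteratedDeriv j f s| ≤ M := by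
  have hbounded : ∀ j, ∃ C, ∀ s, |iteratedDeriv j f s| ≤ C := fun j => by
    obtain ⟨C, hC⟩ := ((periodic_iteratedDeriv hper j).isBounded_of_continuous hL
      (hf.continuous_iteratedDeriv j (by exact_mod_cast le_top))).exists_norm_le
    exact ⟨C, fun s => hC _ (mem_range_self s)⟩
  choose C hC using hbounded
  have hC_nonneg : ∀ j, 0 ≤ C j := fun j => (abs_nonneg _).trans (hC j 0)
  refine ⟨∑ j ∈ Finset.range (n + 1), C j + 1,
    add_pos_of_nonneg_of_pos (Finset.sum_nonneg fun j _ => hC_nonneg j) one_pos,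
    fun j hj s => (hC j s).trans ?_⟩
  have hle := Finset.single_le_sum (fun j _ => hC_nonneg j) (Finset.mem_range_succ_iff.2 hj)
  linarith

theorem exists_pos_le_of_periodic (hL : 0 < L) (hf : Continuous f) (hper : Periodic f L)
    (hpos : ∀ s, 0 < f s) : ∃ c > 0, ∀ s, c ≤ f s := by
  obtain ⟨s₀, -, hmin⟩ := isCompact_Icc.exists_isMinOn (nonempty_Icc.2 hL.le) hf.continuousOn
  refine ⟨f s₀, hpos s₀, fun s => ?_⟩
  obtain ⟨t, ht, hst⟩ := hper.exists_mem_Ico₀ hL s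
  exact hst ▸ hmin (Ico_subset_Icc_self ht)

end PeriodicData

theorem sliceInner_self_le_of_abs_le_const {L c ψ : ℝ} (hL : 0 ≤ L) {u : ℝ → ℝ → ℝ}
    (hu : Continuous (uncurry u)) (h : ∀ s, |u s ψ| ≤ c) : sliceInner L u u ψ ≤ L * c ^ 2 := by
  refine (sliceInner_self_le_of_abs_le (v := fun _ _ => 1) hL hu (by fun_prop)
    fun s => by simpa using h s).trans_eq ?_
  simp [sliceInner, sliceInt, mul_comm]

section ProfileData

variable {L : ℝ} {q g : ℝ → ℝ} (hL : 0 < L) (hq : ContDiff ℝ (⊤ : ℕ∞) q) (hqper : Periodic q L)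
include hL hq hqper

section Positive

variable (hqpos : ∀ s, 0 < q s)
include hqpos

theorem exists_isEllipticCoeff_const_mul {ω₀ : ℝ} (hω₀ : 0 < ω₀) (ω₁ : ℝ) :
    ∃ a₀ > 0, ∃ a₁, ∀ ω, ω₀ ≤ ω → ω ≤ ω₁ → IsEllipticCoeff a₀ a₁ (fun s => ω * q s) ∧
      (∀ s, |deriv (fun s => ω * q s) s| ≤ a₁) ∧
      ∀ s, |deriv (deriv (fun s => ω * q s)) s| ≤ a₁ := by
  obtain ⟨M, -, hqM⟩ := exists_abs_iteratedDeriv_le_of_periodic hL.ne' hq hqper 2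
  obtain ⟨c, hc, hcq⟩ := exists_pos_le_of_periodic hL hq.continuous hqper hqpos
  refine ⟨ω₀ * c, mul_pos hω₀ hc, ω₁ * M, fun ω hω hω' => ?_⟩
  have hωpos : 0 < ω := hω₀.trans_le hω
  have hderiv : ∀ j ≤ 2, ∀ s, |iteratedDeriv j (fun s => ω * q s) s| ≤ ω₁ * M := fun j hj s => by
    rw [iteratedDeriv_const_mul_field]
    exact abs_mul_le_mul (by rwa [abs_of_pos hωpos]) (hqM j hj s)
  refine ⟨⟨mul_pos hω₀ hc, contDiff_const.mul hq, fun s => mul_le_mul hω (hcq s) hc.le hωpos.le,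
    fun s => (le_abs_self _).trans (hderiv 0 (by simp) s)⟩, fun s => ?_, fun s => ?_⟩
  · rw [← iteratedDeriv_one]
    exact hderiv 1 (by simp) s
  · simpa only [iteratedDeriv_succ, iteratedDeriv_zero] using hderiv 2 le_rfl s

theorem exists_abs_iteratedDeriv_inv_sq_le {ω₀ : ℝ} (hω₀ : 0 < ω₀) (n : ℕ) :
    ∃ R > 0, ∀ ω, ω₀ ≤ ω → ∀ j ≤ n, ∀ s,
      |iteratedDeriv j (fun s => (ω ^ 2)⁻¹ * (q s ^ 2)⁻¹) s| ≤ R := by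
  obtain ⟨M, hM, hqM⟩ := exists_abs_iteratedDeriv_le_of_periodic (f := fun s => (q s ^ 2)⁻¹) hL.ne'
    ((hq.pow 2).inv fun s => (pow_pos (hqpos s) 2).ne') (fun s => by simp only [hqper s]) n
  refine ⟨(ω₀ ^ 2)⁻¹ * M, by positivity, fun ω hω j hj s => ?_⟩
  rw [iteratedDeriv_const_mul_field]
  refine abs_mul_le_mul ?_ (hqM j hj s)
  rw [abs_of_nonneg (by positivity)]
  gcongr

end Positive

theorem exists_sliceInner_boundary_le (hg : ContDiff ℝ (⊤ : ℕ∞) g) (hgper : Periodic g L)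
    (Ω : ℝ) (n : ℕ) :
    ∃ M > 0, ∀ {ε ω : ℝ} {Q : ℝ → ℝ → ℝ}, |ε| ≤ 1 → |ω| ≤ Ω → Smooth2 Q →
      (∀ s, Q s 0 = ε * ω * q s ^ 2 + 2 * ε * g s * q s + ε ^ 2 * g s ^ 2) →
      ∀ j ≤ n, sliceInner L (dS j Q) (dS j Q) 0 ≤ M * ε ^ 2 := by
  have hqq : ContDiff ℝ (⊤ : ℕ∞) (fun s => q s ^ 2) := hq.pow 2
  have hgq : ContDiff ℝ (⊤ : ℕ∞) (fun s => g s * q s) := hg.mul hq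
  have hgg : ContDiff ℝ (⊤ : ℕ∞) (fun s => g s ^ 2) := hg.pow 2
  obtain ⟨A, hA, hqqA⟩ := exists_abs_iteratedDeriv_le_of_periodic hL.ne' hqq
    (fun s => by simp only [hqper s]) n
  obtain ⟨B, hB, hgqB⟩ := exists_abs_iteratedDeriv_le_of_periodic hL.ne' hgq
    (fun s => by simp only [hqper s, hgper s]) n
  obtain ⟨C, hC, hggC⟩ := exists_abs_iteratedDeriv_le_of_periodic hL.ne' hgg
    (fun s => by simp only [hgper s]) n
  refine ⟨L * (|Ω| * A + 2 * B + C) ^ 2, by positivity, fun {ε ω Q} hε hω hQ hbdry j hj => ?_⟩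
  have htrace : (fun s => Q s 0) = fun s => ε * (ω * q s ^ 2 + 2 * (g s * q s) + ε * g s ^ 2) :=
    funext fun s => by rw [hbdry]; ring
  have hbound : ∀ s, |dS j Q s 0| ≤ |ε| * (|Ω| * A + 2 * B + C) := fun s => by
    have hsmooth : ∀ {f : ℝ → ℝ}, ContDiff ℝ (⊤ : ℕ∞) f → ContDiffAt ℝ j f s := fun hf =>
      hf.contDiffAt.of_le (by exact_mod_cast le_top)
    rw [dS, htrace, iteratedDeriv_const_mul_field,
      iteratedDeriv_fun_add (hsmooth (by fun_prop)) (hsmooth (by fun_prop)),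
      iteratedDeriv_fun_add (hsmooth (by fun_prop)) (hsmooth (by fun_prop)),
      iteratedDeriv_const_mul_field, iteratedDeriv_const_mul_field, iteratedDeriv_const_mul_field]
    have hterm₁ := abs_mul_le_mul (hω.trans (le_abs_self Ω)) (hqqA j hj s)
    have hterm₂ := abs_mul_le_mul (abs_of_pos (two_pos (α := ℝ))).le (hgqB j hj s)
    have hterm₃ := abs_mul_le_mul hε (hggC j hj s)
    rw [one_mul] at hterm₃
    exact abs_mul_le_mul le_rfl ((abs_add_three _ _ _).trans (by gcongr))
  refine (sliceInner_self_le_of_abs_le_const hL.le (hQ.dS j).continuous_uncurry hbound).trans_eq ?_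
  rw [mul_pow, sq_abs]
  ring

end ProfileData

theorem exists_abs_omegaBarStar_le (L : ℝ) {q g : ℝ → ℝ} (hq : Continuous q) (hg : Continuous g) :
    ∃ Ω, ∀ ε, |ε| ≤ 1 → |omegaBarStar L q g ε| ≤ Ω := by
  have hcont : Continuous (omegaBarStar L q g) := by
    unfold omegaBarStar
    fun_prop
  obtain ⟨Ω, hΩ⟩ := (isCompact_Icc (a := (-1 : ℝ)) (b := 1)).exists_bound_of_continuousOn
    hcont.continuousOn
  exact ⟨Ω, fun ε hε => hΩ ε (abs_le.1 hε)⟩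

/-! ### The iteration step -/

section Iteration

variable {L : ℝ} {q : ℝ → ℝ} (hL : 0 < L) (hq : ContDiff ℝ (⊤ : ℕ∞) q) (hqper : Periodic q L)
  (hqpos : ∀ s, 0 < q s) {ω₀ : ℝ} (hω₀ : 0 < ω₀)
include hL hq hqper hqpos hω₀

theorem exists_forcing_le_of_XnormSq_le (m : ℕ) :
    ∃ C > 0, ∃ η > 0, ∀ {ω e : ℝ} {P F : ℝ → ℝ → ℝ}, ω₀ ≤ ω → Smooth2 P → PeriodicS L P →
      XFinite L 2 m P → XnormSq L 2 m P ≤ e → e ≤ η → Smooth2 F →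
      (∀ s, ∀ ψ > 0, F s ψ = fNonlin q ω P s ψ) →
      (∀ k ≤ 2, MemWL2 L (polyWeight (2 * m) 1) (dS k F) ∧
        wNormSq L (polyWeight (2 * m) 1) (dS k F) ≤ (C * e) ^ 2) ∧
      ∀ ψ > 0, |sliceInt L F ψ| ≤ C * e / (1 + ψ) ^ (2 * m) := by
  obtain ⟨R, hR, hr_le⟩ := exists_abs_iteratedDeriv_inv_sq_le hL hq hqper hqpos hω₀ 2
  have hD := decayConst_pos hL (2 * m)
  set D := decayConst L (2 * m)
  refine ⟨1 + 36000 * R ^ 2 * D + 2 * L * R * D, by positivity, 1 / (2 * R) ^ 2 / D, by positivity,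
    fun {ω e P F} hω hP hPper hPfin hPe heη hFsmooth hFP => ?_⟩
  have hmem : ∀ k ≤ 2, MemEnergy L (polyWeight (2 * m) 1) (dS k P) := fun k hk =>
    hPfin.memEnergy hL.le hP hk le_rfl
  have henergy : ∀ k ≤ 2, energy L (polyWeight (2 * m) 1) (dS k P) ≤ e := fun k hk =>
    (hPfin.energy_le_XnormSq hL.le hk le_rfl).trans hPe
  have he : 0 ≤ e := (XnormSq_nonneg L 2 m P).trans hPe
  have hsmall : R * √(D * e) ≤ 1 / 2 := by
    have hDe : D * e ≤ (1 / (2 * R)) ^ 2 := by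
      rwa [← le_div_iff₀' hD, one_div_pow]
    calc R * √(D * e) ≤ R * (1 / (2 * R)) := by
          gcongr; exact Real.sqrt_le_iff.2 ⟨by positivity, hDe⟩
      _ = 1 / 2 := by field_simp
  have hr : ContDiff ℝ (⊤ : ℕ∞) fun s => (ω ^ 2)⁻¹ * (q s ^ 2)⁻¹ :=
    contDiff_const.mul ((hq.pow 2).inv fun s => (pow_pos (hqpos s) 2).ne')
  have hF : ∀ s, ∀ ψ > 0,
      F s ψ = sqrtDefect ((ω ^ 2)⁻¹ * (q s ^ 2)⁻¹ * P s ψ) * dS 1 P s ψ := fun s ψ hψ =>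
    (hFP s ψ hψ).trans (fNonlin_eq_sqrtDefect_mul (hω₀.trans_le hω) (hqpos s) P ψ)
  have hA : 0 ≤ 36000 * R ^ 2 * D := by positivity
  have hB : 0 ≤ 2 * L * R * D := by positivity
  refine ⟨fun k hk => ?_, fun ψ hψ => ?_⟩
  · obtain ⟨hFmem, hFle⟩ := memWL2_and_wNormSq_dS_forcing_le hL hP hPper hmem henergy hr
      (hr_le ω hω) hsmall hF hFsmooth hk
    refine ⟨hFmem, hFle.trans ?_⟩
    rw [mul_pow]
    gcongr
    nlinarith
  · refine (abs_sliceInt_forcing_le hL hP hPper hmem henergy (hr_le ω hω) hsmall hF hψ).trans ?_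
    gcongr
    linarith

theorem exists_XnormSq_le_of_sliceInner_le (ω₁ : ℝ) {m : ℕ} (hm : 3 ≤ m) :
    ∃ C > 0, ∃ η > 0, ∀ {ω e b : ℝ} {P Q : ℝ → ℝ → ℝ}, ω₀ ≤ ω → ω ≤ ω₁ →
      Smooth2 P → PeriodicS L P → XFinite L 2 m P → XnormSq L 2 m P ≤ e → e ≤ η →
      Smooth2 Q → PeriodicS L Q → XFinite L 2 m Q →
      (∀ s, ∀ ψ > 0, dS 1 Q s ψ - ω * q s * dPsi 2 Q s ψ = fNonlin q ω P s ψ) →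
      (∀ k ≤ 3, sliceInner L (dS k Q) (dS k Q) 0 ≤ b) →
      XnormSq L 2 m Q ≤ C * (e ^ 2 + b) := by
  obtain ⟨a₀, ha₀, a₁, hcoeff⟩ := exists_isEllipticCoeff_const_mul hL hq hqper hqpos hω₀ ω₁
  obtain ⟨A, hA, η, hη, hforcing⟩ := exists_forcing_le_of_XnormSq_le hL hq hqper hqpos hω₀ m
  obtain ⟨K, hK, hlinear⟩ := exists_energy_dS_le hL ha₀ a₁ a₁ (m := m) (by lia)
  refine ⟨(2 + 1) * (m + 1) * (K * (A ^ 2 + 1)), by positivity, η, hη,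
    fun {ω e b P Q} hω hω' hP hPper hPfin hPe heη hQ hQper hQfin heq hb => ?_⟩
  obtain ⟨ha, hda, hdda⟩ := hcoeff ω hω hω'
  set F : ℝ → ℝ → ℝ := fun s ψ => dS 1 Q s ψ - ω * q s * dPsi 2 Q s ψ
  have hFsmooth : Smooth2 F := hQ.dS_one.sub ((Smooth2.of_fst ha.contDiff).mul hQ.dPsi_two)
  have hsol : IsHeatSolution L (fun s => ω * q s) Q F := ⟨hQ, hQper, fun s ψ => by ring⟩
  obtain ⟨hFnorm, hFmean⟩ := hforcing hω hP hPper hPfin hPe heη hFsmooth heq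
  have he : 0 ≤ e := (XnormSq_nonneg L 2 m P).trans hPe
  have hb₀ : 0 ≤ b := (sliceInner_self_nonneg hL.le _ _).trans (hb 0 (by simp))
  have hFle : (A * e) ^ 2 ≤ (A * e) ^ 2 + b := by linarith
  have hble : b ≤ (A * e) ^ 2 + b := by linarith [sq_nonneg (A * e)]
  have hdecay : ∀ ψ > 0, |sliceInt L F ψ| ≤ A * e / (1 + ψ) ^ (m + 3) := fun ψ hψ =>
    (hFmean ψ hψ).trans <| by
      gcongr A * e / ?_
      exact pow_le_pow_right₀ (by linarith) (by lia)
  have hQenergy := hlinear ha hda hdda hsol (fun k hk => hQfin.memEnergy hL.le hQ hk le_rfl)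
    (fun k hk => (hFnorm k hk).1) (fun k hk => (hFnorm k hk).2.trans hFle)
    (by positivity) hFle hdecay fun k hk => (hb k hk).trans hble
  calc XnormSq L 2 m Q ≤ (2 + 1) * (m + 1) * (K * ((A * e) ^ 2 + b)) := by
        exact_mod_cast hQfin.XnormSq_le hL.le hQ hQenergy
    _ ≤ (2 + 1) * (m + 1) * (K * ((A ^ 2 + 1) * (e ^ 2 + b))) := by
      gcongr; nlinarith [mul_nonneg (sq_nonneg A) hb₀]
    _ = (2 + 1) * (m + 1) * (K * (A ^ 2 + 1)) * (e ^ 2 + b) := by ring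

end Iteration

theorem one_half_le_and_le_two_of_sq_eq {ω x : ℝ} (hω : 0 < ω) (hsq : ω ^ 2 = 1 - x)
    (hx : |x| ≤ 1 / 2) : 1 / 2 ≤ ω ∧ ω ≤ 2 := by
  obtain ⟨hx₁, hx₂⟩ := abs_le.1 hx
  constructor <;> nlinarith

section SmallParameter

open scoped Topology

theorem tendsto_rpow_nhdsGT_zero {p : ℝ} (hp : 0 < p) :
    Tendsto (fun ε : ℝ => ε ^ p) (𝓝[>] 0) (𝓝 0) :=
  ((Real.continuous_rpow_const hp.le).tendsto' 0 0 (Real.zero_rpow hp.ne')).mono_left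
    nhdsWithin_le_nhds

variable {θ : ℝ} (hθ : 0 < θ) (hθ' : θ < 1)
include hθ hθ'

theorem eventually_mul_add_sq_le_rpow_sq (K : ℝ) :
    ∀ᶠ ε : ℝ in 𝓝[>] 0, K * (((ε ^ θ) ^ 2) ^ 2 + ε ^ 2) ≤ (ε ^ θ) ^ 2 := by
  have htendsto : Tendsto (fun ε : ℝ => K * ((ε ^ θ) ^ 2 + (ε ^ (1 - θ)) ^ 2)) (𝓝[>] 0) (𝓝 0) := by
    simpa using (((tendsto_rpow_nhdsGT_zero hθ).pow 2).add
      ((tendsto_rpow_nhdsGT_zero (sub_pos.2 hθ')).pow 2)).const_mul K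
  filter_upwards [htendsto.eventually_le_const one_pos, self_mem_nhdsWithin] with ε hle hε
  have hsplit : ε ^ θ * ε ^ (1 - θ) = ε := by
    rw [← Real.rpow_add hε, add_sub_cancel, Real.rpow_one]
  calc K * (((ε ^ θ) ^ 2) ^ 2 + ε ^ 2)
      = K * ((ε ^ θ) ^ 2 + (ε ^ (1 - θ)) ^ 2) * (ε ^ θ) ^ 2 := by
        nth_rw 2 [← hsplit]; ring
    _ ≤ (ε ^ θ) ^ 2 := mul_le_of_le_one_left (sq_nonneg _) hle

theorem exists_small_parameter (Ω K : ℝ) {η : ℝ} (hη : 0 < η) :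
    ∃ ε₀ : ℝ, 0 < ε₀ ∧ ε₀ < 1 ∧ ∀ ε : ℝ, 0 < ε → ε < ε₀ →
      ε * Ω ≤ 1 / 2 ∧ (ε ^ θ) ^ 2 ≤ η ∧ K * (((ε ^ θ) ^ 2) ^ 2 + ε ^ 2) ≤ (ε ^ θ) ^ 2 := by
  have hΩ : ∀ᶠ ε : ℝ in 𝓝[>] 0, ε * Ω ≤ 1 / 2 :=
    (((continuous_mul_const Ω).tendsto' 0 0 (zero_mul Ω)).mono_left
      nhdsWithin_le_nhds).eventually_le_const one_half_pos
  have hη' : ∀ᶠ ε : ℝ in 𝓝[>] 0, (ε ^ θ) ^ 2 ≤ η :=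
    ((tendsto_rpow_nhdsGT_zero hθ).pow 2).eventually_le_const (by simpa using hη)
  obtain ⟨δ, hδ, hsub⟩ := mem_nhdsGT_iff_exists_Ioo_subset.1
    (hΩ.and (hη'.and (eventually_mul_add_sq_le_rpow_sq hθ hθ' K)))
  exact ⟨min δ (1 / 2), lt_min hδ one_half_pos, (min_le_right _ _).trans_lt one_half_lt_one,
    fun ε hε hlt => hsub ⟨hε, hlt.trans_le (min_le_left _ _)⟩⟩

end SmallParameter

theorem bootstrap_Q_estimate_general (L : ℝ) (hL : 0 < L)
    (q_e : ℝ → ℝ) (hqe : ContDiff ℝ (⊤ : ℕ∞) q_e) (hqeper : Function.Periodic q_e L)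
    (hqepos : ∀ s, 0 < q_e s)
    (g : ℝ → ℝ) (hg : ContDiff ℝ (⊤ : ℕ∞) g) (hgper : Function.Periodic g L)
    {m : ℕ} (hm : 3 ≤ m) {θ : ℝ} (hθ : 0 < θ) (hθ' : θ < 1) (Ω : ℝ) :
    ∃ ε₀ : ℝ, 0 < ε₀ ∧ ε₀ < 1 ∧
      ∀ ε : ℝ, 0 < ε → ε < ε₀ →
      ∀ ω' ωbar' : ℝ, 0 < ω' → ω' ^ 2 = 1 - ε * ωbar' →
        |ωbar' - omegaBarStar L q_e g ε| ≤ Ω →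
      ∀ Qprev : ℝ → ℝ → ℝ,
        Smooth2 Qprev → PeriodicS L Qprev → XFinite L 2 m Qprev →
        Xnorm L 2 m Qprev ≤ ε ^ θ →
      ∀ ωbar : ℝ, |ωbar - omegaBarStar L q_e g ε| ≤ Ω →
      ∀ Q : ℝ → ℝ → ℝ,
        Smooth2 Q → PeriodicS L Q →
        (∀ s : ℝ, ∀ ψ > (0:ℝ),
          dS 1 Q s ψ - ω' * q_e s * dPsi 2 Q s ψ = fNonlin q_e ω' Qprev s ψ) →
        (∀ s : ℝ, Q s 0
          = ε * ωbar * (q_e s) ^ 2 + 2 * ε * g s * q_e s + ε ^ 2 * (g s) ^ 2) →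
        XFinite L 2 m Q →
        Xnorm L 2 m Q ≤ ε ^ θ := by
  obtain ⟨Ω₀, hΩ₀⟩ := exists_abs_omegaBarStar_le L hqe.continuous hg.continuous
  obtain ⟨M, hM, hbdry⟩ := exists_sliceInner_boundary_le hL hqe hqeper hg hgper (Ω + Ω₀) 3
  obtain ⟨C, hC, η, hη, hstep⟩ :=
    exists_XnormSq_le_of_sliceInner_le hL hqe hqeper hqepos one_half_pos 2 hm
  obtain ⟨ε₀, hε₀, hε₀_lt, hsmall⟩ := exists_small_parameter hθ hθ' (Ω + Ω₀) (C * (1 + M)) hη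
  refine ⟨ε₀, hε₀, hε₀_lt, fun ε hε hεlt ω' ωbar' hω hω_sq hωbar' P hP hPper hPfin hPle ωbar hωbar
    Q hQ hQper hQeq hQbdry hQfin => ?_⟩
  obtain ⟨hεΩ, hεη, hεK⟩ := hsmall ε hε hεlt
  have hε_abs : |ε| ≤ 1 := by rw [abs_of_pos hε]; exact (hεlt.trans hε₀_lt).le
  have habs : ∀ {x}, |x - omegaBarStar L q_e g ε| ≤ Ω → |x| ≤ Ω + Ω₀ := fun {x} hx => by
    linarith [abs_sub_abs_le_abs_sub x (omegaBarStar L q_e g ε), hΩ₀ ε hε_abs]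
  obtain ⟨hω_ge, hω_le⟩ := one_half_le_and_le_two_of_sq_eq hω hω_sq <|
    (abs_mul_le_mul (abs_of_pos hε).le (habs hωbar')).trans hεΩ
  have hPsq : XnormSq L 2 m P ≤ (ε ^ θ) ^ 2 := (Real.sqrt_le_left (by positivity)).1 hPle
  refine Real.sqrt_le_iff.2 ⟨by positivity, ?_⟩
  calc XnormSq L 2 m Q ≤ C * (((ε ^ θ) ^ 2) ^ 2 + M * ε ^ 2) :=
        hstep hω_ge hω_le hP hPper hPfin hPsq hεη hQ hQper hQfin hQeq
          (hbdry hε_abs (habs hωbar) hQ hQbdry)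
    _ ≤ C * ((1 + M) * (((ε ^ θ) ^ 2) ^ 2 + ε ^ 2)) := by
      gcongr; nlinarith [sq_nonneg ε, mul_nonneg hM.le (sq_nonneg ((ε ^ θ) ^ 2))]
    _ ≤ (ε ^ θ) ^ 2 := by rwa [← mul_assoc]

/-- **Propagation of the main bootstrap bound `‖Q_n‖_{X_{2,50}} ≤ ε^{0.99}` along the
iteration scheme.** -/
theorem bootstrap_Q_estimate
    (L : ℝ) (hL : 0 < L)
    (q_e : ℝ → ℝ) (hqe : ContDiff ℝ (⊤ : ℕ∞) q_e) (hqeper : Function.Periodic q_e L)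
    (hqepos : ∀ s, 0 < q_e s)
    (g : ℝ → ℝ) (hg : ContDiff ℝ (⊤ : ℕ∞) g) (hgper : Function.Periodic g L) :
    ∃ ε₀ : ℝ, 0 < ε₀ ∧ ε₀ < 1 ∧
      ∀ ε : ℝ, 0 < ε → ε < ε₀ →
      ∀ ω' ωbar' : ℝ, 0 < ω' → ω' ^ 2 = 1 - ε * ωbar' →
        |ωbar' - omegaBarStar L q_e g ε| ≤ ε ^ (0.97 : ℝ) →
      ∀ Qprev : ℝ → ℝ → ℝ,
        Smooth2 Qprev → PeriodicS L Qprev → XFinite L 2 50 Qprev →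
        Xnorm L 2 50 Qprev ≤ ε ^ (0.99 : ℝ) →
      ∀ ωbar : ℝ, |ωbar - omegaBarStar L q_e g ε| ≤ ε ^ (0.97 : ℝ) →
      ∀ Q : ℝ → ℝ → ℝ,
        Smooth2 Q → PeriodicS L Q →
        (∀ s : ℝ, ∀ ψ > (0:ℝ),
          dS 1 Q s ψ - ω' * q_e s * dPsi 2 Q s ψ = fNonlin q_e ω' Qprev s ψ) →
        (∀ s : ℝ, Q s 0
          = ε * ωbar * (q_e s) ^ 2 + 2 * ε * g s * q_e s + ε ^ 2 * (g s) ^ 2) →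
        (∀ s : ℝ, Tendsto (fun ψ => Q s ψ) atTop (nhds 0)) →
        XFinite L 2 50 Q →
        Xnorm L 2 50 Q ≤ ε ^ (0.99 : ℝ) := by
  obtain ⟨ε₀, hε₀, hε₀_lt, hgeneral⟩ := bootstrap_Q_estimate_general L hL q_e hqe hqeper hqepos
    g hg hgper (m := 50) (by norm_num) (θ := 0.99) (by norm_num) (by norm_num) 1
  refine ⟨ε₀, hε₀, hε₀_lt, fun ε hε hεlt ω' ωbar' hω hω_sq hωbar' P hP hPper hPfin hPle ωbar hωbar
    Q hQ hQper hQeq hQbdry _ hQfin => ?_⟩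
  have hrpow : ε ^ (0.97 : ℝ) ≤ 1 :=
    Real.rpow_le_one hε.le (hεlt.trans hε₀_lt).le (by norm_num)
  exact hgeneral ε hε hεlt ω' ωbar' hω hω_sq (hωbar'.trans hrpow) P hP hPper hPfin hPle
    ωbar (hωbar.trans hrpow) Q hQ hQper hQeq hQbdry hQfin
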